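/- arXiv:2605.12367 — 2 statements merged into one kernel-verified Lean document; each statement's English description precedes it below -/
import Mathlib

section
/- Let κ > 0 and let v : ℝ² → ℂ be of class C² on all of ℝ², satisfy the Helmholtz equation Δv + κ²v = 0 on all of ℝ², and satisfy the Sommerfeld radiation condition for wavenumber κ. Then v vanishes identically: v(x) = 0 for all x ∈ ℝ². -/
noncomputable section

/-- The Euclidean Laplacian of a complex-valued function on `ℝ²`,
given as the sum of the second partial derivatives in the coordinate directions. -/
def lap (u : EuclideanSpace ℝ (Fin 2) → ℂ) (x : EuclideanSpace ℝ (Fin 2)) : ℂ :=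
  ∑ i : Fin 2,
    fderiv ℝ (fun y => fderiv ℝ u y (EuclideanSpace.single i 1)) x (EuclideanSpace.single i 1)

/-- `v` satisfies the Sommerfeld radiation condition for wavenumber `κ`: for every `ε > 0`
there is `R₀ > 0` such that `‖x‖^{1/2}·|∂v/∂r(x) − iκ v(x)| ≤ ε` whenever `‖x‖ ≥ R₀`,
where the radial derivative is the Fréchet derivative applied to `x/‖x‖`. -/
def SommerfeldRadiation (κ : ℝ) (v : EuclideanSpace ℝ (Fin 2) → ℂ) : Prop :=
  ∀ ε > (0 : ℝ), ∃ R₀ > (0 : ℝ), ∀ x : EuclideanSpace ℝ (Fin 2), R₀ ≤ ‖x‖ →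
    Real.sqrt ‖x‖ * ‖fderiv ℝ v x (‖x‖⁻¹ • x) - Complex.I * κ * v x‖ ≤ ε

/-!
The angular Fourier modes of a solution of the Helmholtz equation solve Bessel equations in the
radius `r`. For such a mode `a` the flux `r * Im (conj a * a')` is constant, and it vanishes because
the mode is regular at the origin. Hence the cross term in `‖a' - iκa‖²` drops out, and the
radiation condition gives `r * (‖a'‖² + κ²‖a‖²) → 0`. The substitution `w = √r * a` removes the
first-order term of Bessel's equation, leaving `w'' + (κ² + O(r⁻²)) w = 0`. The energy
`‖w'‖² + κ²‖w‖²` of a nonzero solution of this equation cannot tend to zero, by Grönwall's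
inequality run from infinity, because the perturbation is integrable.
-/

open MeasureTheory Filter Topology Set
open scoped InnerProductSpace ComplexConjugate Real Interval

local notation "ℝ²" => EuclideanSpace ℝ (Fin 2)

theorem eq_zero_of_tendsto_zero_of_neg_mul_le_deriv {F F' φ φ' : ℝ → ℝ} {a M : ℝ}
    (hF : ∀ r > a, HasDerivAt F (F' r) r) (hφ : ∀ r > a, HasDerivAt φ (φ' r) r)
    (hF' : ∀ r > a, -(φ' r * F r) ≤ F' r) (hφM : ∀ r > a, φ r ≤ M)
    (hF_nonneg : ∀ r > a, 0 ≤ F r) (hlim : Tendsto F atTop (𝓝 0)) :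
    ∀ r > a, F r = 0 := by
  have hG : ∀ r > a, HasDerivAt (fun s ↦ F s * Real.exp (φ s))
      ((F' r + φ' r * F r) * Real.exp (φ r)) r := fun r hr ↦
    ((hF r hr).mul (hφ r hr).exp).congr_deriv (by ring)
  have hmono : MonotoneOn (fun s ↦ F s * Real.exp (φ s)) (Ioi a) := by
    refine monotoneOn_of_hasDerivWithinAt_nonneg (convex_Ioi a)
      (fun r hr ↦ (hG r hr).continuousAt.continuousWithinAt)
      (fun r hr ↦ (hG r (interior_subset hr)).hasDerivWithinAt) fun r hr ↦ ?_
    have := hF' r (interior_subset hr)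
    exact mul_nonneg (by linarith) (Real.exp_pos _).le
  intro r hr
  have hle : F r * Real.exp (φ r) ≤ 0 * Real.exp M := by
    refine ge_of_tendsto (hlim.mul_const (Real.exp M)) ?_
    filter_upwards [eventually_ge_atTop r] with s hs
    have hsa : a < s := hr.trans_le hs
    calc F r * Real.exp (φ r) ≤ F s * Real.exp (φ s) := hmono hr hsa hs
      _ ≤ F s * Real.exp M := by
        gcongr
        exacts [hF_nonneg s hsa, hφM s hsa]
  rw [zero_mul] at hle
  exact le_antisymm (nonpos_of_mul_nonpos_left hle (Real.exp_pos _)) (hF_nonneg r hr)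

section WaveEnergy

variable {E : Type*} [NormedAddCommGroup E] {κ : ℝ}

/-- The energy density `‖w'‖² + κ²‖w‖²` of a solution of `w'' + (κ² + q) w = 0`, conserved when
`q = 0`. The derivative is carried as a separate function. -/
def waveEnergy (κ : ℝ) (w w' : ℝ → E) (r : ℝ) : ℝ :=
  ‖w' r‖ ^ 2 + κ ^ 2 * ‖w r‖ ^ 2

theorem waveEnergy_nonneg (κ : ℝ) (w w' : ℝ → E) (r : ℝ) : 0 ≤ waveEnergy κ w w' r := by
  unfold waveEnergy
  positivity

theorem eq_zero_of_waveEnergy_eq_zero (hκ : κ ≠ 0) {w w' : ℝ → E} {r : ℝ}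
    (h : waveEnergy κ w w' r = 0) : w r = 0 := by
  have hsum := (add_eq_zero_iff_of_nonneg (by positivity) (by positivity)).1 h
  simpa [hκ] using hsum.2

theorem waveEnergy_sqrt_smul_le [NormedSpace ℝ E] (hκ : κ ≠ 0) (a a' : ℝ → E) {r : ℝ} (hr : 1 ≤ r) :
    waveEnergy κ (fun s ↦ √s • a s) (fun s ↦ √s • a' s + (2 * √s)⁻¹ • a s) r ≤
      (2 + 1 / κ ^ 2) * (r * waveEnergy κ a a' r) := by
  have hr0 : 0 < r := by linarith
  have hsq : √r ^ 2 = r := Real.sq_sqrt hr0.le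
  have hinv : r⁻¹ ≤ r := (inv_le_one_of_one_le₀ hr).trans hr
  have hadd : ‖√r • a' r + (2 * √r)⁻¹ • a r‖ ^ 2 ≤
      2 * (r * ‖a' r‖ ^ 2) + r / 2 * ‖a r‖ ^ 2 :=
    calc ‖√r • a' r + (2 * √r)⁻¹ • a r‖ ^ 2
      _ ≤ (‖√r • a' r‖ + ‖(2 * √r)⁻¹ • a r‖) ^ 2 := by gcongr; exact norm_add_le _ _
      _ ≤ 2 * (‖√r • a' r‖ ^ 2 + ‖(2 * √r)⁻¹ • a r‖ ^ 2) := add_sq_le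
      _ = 2 * (r * ‖a' r‖ ^ 2) + r⁻¹ / 2 * ‖a r‖ ^ 2 := by
        simp only [norm_smul, mul_pow, Real.norm_eq_abs, sq_abs, inv_pow, hsq, mul_inv]
        ring
      _ ≤ _ := by gcongr
  simp only [waveEnergy, norm_smul, mul_pow, Real.norm_eq_abs, sq_abs, hsq]
  have hexpand : (2 + 1 / κ ^ 2) * (r * (‖a' r‖ ^ 2 + κ ^ 2 * ‖a r‖ ^ 2)) =
      2 * (r * ‖a' r‖ ^ 2) + 2 * (κ ^ 2 * (r * ‖a r‖ ^ 2)) + r * ‖a' r‖ ^ 2 / κ ^ 2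
        + r * ‖a r‖ ^ 2 := by
    field_simp
    ring
  have : 0 ≤ r * ‖a' r‖ ^ 2 / κ ^ 2 := by positivity
  have : 0 ≤ κ ^ 2 * (r * ‖a r‖ ^ 2) := by positivity
  have : 0 ≤ r * ‖a r‖ ^ 2 := by positivity
  linarith

variable [InnerProductSpace ℝ E]

theorem hasDerivAt_waveEnergy {w w' : ℝ → E} {q r : ℝ} (hw : HasDerivAt w (w' r) r)
    (hw' : HasDerivAt w' (-(κ ^ 2 + q) • w r) r) :
    HasDerivAt (waveEnergy κ w w') (-(2 * q * ⟪w r, w' r⟫_ℝ)) r := by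
  refine (hw'.norm_sq.add (hw.norm_sq.const_mul (κ ^ 2))).congr_deriv ?_
  rw [real_inner_smul_right, real_inner_comm]
  ring

theorem two_mul_abs_mul_inner_le_waveEnergy (κ : ℝ) (w w' : ℝ → E) (r : ℝ) :
    2 * |κ| * |⟪w r, w' r⟫_ℝ| ≤ waveEnergy κ w w' r :=
  calc 2 * |κ| * |⟪w r, w' r⟫_ℝ|
    _ ≤ 2 * |κ| * (‖w r‖ * ‖w' r‖) := by gcongr; exact abs_real_inner_le_norm _ _
    _ = 2 * ‖w' r‖ * (|κ| * ‖w r‖) := by ring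
    _ ≤ ‖w' r‖ ^ 2 + (|κ| * ‖w r‖) ^ 2 := two_mul_le_add_sq _ _
    _ = waveEnergy κ w w' r := by rw [mul_pow, sq_abs, waveEnergy]

theorem eq_zero_of_tendsto_waveEnergy_zero (hκ : κ ≠ 0) {w w' : ℝ → E} {q Q : ℝ → ℝ} {a M : ℝ}
    (hw : ∀ r > a, HasDerivAt w (w' r) r)
    (hw' : ∀ r > a, HasDerivAt w' (-(κ ^ 2 + q r) • w r) r)
    (hQ : ∀ r > a, HasDerivAt Q |q r| r) (hQM : ∀ r > a, Q r ≤ M)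
    (hlim : Tendsto (waveEnergy κ w w') atTop (𝓝 0)) :
    ∀ r > a, w r = 0 := by
  have hbound : ∀ r > a, -(|q r| / |κ| * waveEnergy κ w w' r) ≤ -(2 * q r * ⟪w r, w' r⟫_ℝ) := by
    intro r _
    refine neg_le_neg ?_
    calc 2 * q r * ⟪w r, w' r⟫_ℝ
      _ ≤ |2 * q r * ⟪w r, w' r⟫_ℝ| := le_abs_self _
      _ = |q r| / |κ| * (2 * |κ| * |⟪w r, w' r⟫_ℝ|) := by
        rw [abs_mul, abs_mul, abs_two]
        field_simp
      _ ≤ |q r| / |κ| * waveEnergy κ w w' r := by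
        gcongr
        exact two_mul_abs_mul_inner_le_waveEnergy κ w w' r
  have henergy := eq_zero_of_tendsto_zero_of_neg_mul_le_deriv
    (fun r hr ↦ hasDerivAt_waveEnergy (hw r hr) (hw' r hr))
    (fun r hr ↦ (hQ r hr).div_const |κ|) hbound
    (fun r hr ↦ div_le_div_of_nonneg_right (hQM r hr) (abs_nonneg κ))
    (fun r _ ↦ waveEnergy_nonneg κ w w' r) hlim
  exact fun r hr ↦ eq_zero_of_waveEnergy_eq_zero hκ (henergy r hr)

end WaveEnergy

/-- `a` solves `r² a'' + r a' + (κ² r² - m) a = 0` on `(0, ∞)`: Bessel's equation of order `√m` in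
the variable `κ r`, for values in a real vector space. The derivatives are explicit functions. -/
structure IsBesselSolution {E : Type*} [NormedAddCommGroup E] [NormedSpace ℝ E] (κ m : ℝ)
    (a a' a'' : ℝ → E) : Prop where
  hasDerivAt : ∀ r > 0, HasDerivAt a (a' r) r
  hasDerivAt_deriv : ∀ r > 0, HasDerivAt a' (a'' r) r
  equation : ∀ r > 0, r ^ 2 • a'' r + r • a' r + (κ ^ 2 * r ^ 2 - m) • a r = 0

namespace IsBesselSolution

section NormalForm

variable {E : Type*} [NormedAddCommGroup E] [NormedSpace ℝ E] {κ m : ℝ} {a a' a'' : ℝ → E}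

theorem hasDerivAt_sqrt_smul (h : IsBesselSolution κ m a a' a'') {r : ℝ} (hr : 0 < r) :
    HasDerivAt (fun s ↦ √s • a s) (√r • a' r + (2 * √r)⁻¹ • a r) r :=
  ((Real.hasDerivAt_sqrt hr.ne').smul (h.hasDerivAt r hr)).congr_deriv (by rw [one_div])

theorem hasDerivAt_deriv_sqrt_smul (h : IsBesselSolution κ m a a' a'') {r : ℝ} (hr : 0 < r) :
    HasDerivAt (fun s ↦ √s • a' s + (2 * √s)⁻¹ • a s)
      (-(κ ^ 2 + (1 / 4 - m) / r ^ 2) • √r • a r) r := by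
  have hsqrt := Real.hasDerivAt_sqrt hr.ne'
  have hs : √r ≠ 0 := (Real.sqrt_pos.2 hr).ne'
  have hinv : HasDerivAt (fun s ↦ (2 * √s)⁻¹) (-(2 * (1 / (2 * √r))) / (2 * √r) ^ 2) r :=
    (hsqrt.const_mul 2).inv (mul_ne_zero two_ne_zero hs)
  refine ((hsqrt.smul (h.hasDerivAt_deriv r hr)).add
    (hinv.smul (h.hasDerivAt r hr))).congr_deriv ?_
  have hode := h.equation r hr
  obtain ⟨s, hs0, rfl⟩ : ∃ s, 0 < s ∧ r = s ^ 2 :=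
    ⟨√r, Real.sqrt_pos.2 hr, (Real.sq_sqrt hr.le).symm⟩
  rw [Real.sqrt_sq hs0.le]
  linear_combination (norm := skip) (s ^ 3)⁻¹ • hode
  match_scalars <;> field_simp <;> ring

end NormalForm

section Decay

variable {E : Type*} [NormedAddCommGroup E] [InnerProductSpace ℝ E] {κ m : ℝ} {a a' a'' : ℝ → E}

theorem eq_zero_of_tendsto_mul_waveEnergy (hκ : κ ≠ 0) (h : IsBesselSolution κ m a a' a'')
    (hlim : Tendsto (fun r ↦ r * waveEnergy κ a a' r) atTop (𝓝 0)) :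
    ∀ r > 0, a r = 0 := by
  have hQ : ∀ r > 0, HasDerivAt (fun s ↦ -(|1 / 4 - m| / s)) |(1 / 4 - m) / r ^ 2| r := by
    intro r hr
    refine ((hasDerivAt_inv hr.ne').const_mul |1 / 4 - m|).neg.congr_deriv ?_
    rw [abs_div, abs_of_pos (pow_pos hr 2)]
    ring
  have hlim_sqrt : Tendsto
      (waveEnergy κ (fun s ↦ √s • a s) (fun s ↦ √s • a' s + (2 * √s)⁻¹ • a s)) atTop (𝓝 0) := by
    refine squeeze_zero' (.of_forall (waveEnergy_nonneg _ _ _)) ?_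
      (by simpa using hlim.const_mul (2 + 1 / κ ^ 2))
    filter_upwards [eventually_ge_atTop 1] with r hr using waveEnergy_sqrt_smul_le hκ a a' hr
  intro r hr
  have hzero := eq_zero_of_tendsto_waveEnergy_zero hκ (fun s hs ↦ h.hasDerivAt_sqrt_smul hs)
    (fun s hs ↦ h.hasDerivAt_deriv_sqrt_smul hs) hQ
    (fun s hs ↦ neg_nonpos.2 (div_nonneg (abs_nonneg _) (le_of_lt hs))) hlim_sqrt r hr
  exact (smul_eq_zero.1 hzero).resolve_left (Real.sqrt_pos.2 hr).ne'

end Decay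

section Radiation

variable {κ m : ℝ} {a a' a'' : ℝ → ℂ}

theorem hasDerivAt_flux (h : IsBesselSolution κ m a a' a'') {r : ℝ} (hr : 0 < r) :
    HasDerivAt (fun s ↦ s * (conj (a s) * a' s).im) 0 r := by
  have ha := h.hasDerivAt r hr
  have hconj : HasDerivAt (fun s ↦ conj (a s)) (conj (a' r)) r :=
    Complex.conjCLE.hasFDerivAt.comp_hasDerivAt r ha
  have him : HasDerivAt (fun s ↦ (conj (a s) * a' s).im)
      (conj (a' r) * a' r + conj (a r) * a'' r).im r :=
    Complex.imCLM.hasFDerivAt.comp_hasDerivAt r (hconj.mul (h.hasDerivAt_deriv r hr))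
  refine ((hasDerivAt_id' r).mul him).congr_deriv ?_
  have hode := congrArg (fun z ↦ (conj (a r) * z).im) (h.equation r hr)
  simp only [Complex.real_smul, Complex.mul_im, Complex.mul_re, Complex.add_im, Complex.add_re,
    Complex.conj_re, Complex.conj_im, Complex.ofReal_re, Complex.ofReal_im, Complex.zero_im,
    zero_mul, mul_zero, add_zero, sub_zero] at hode ⊢
  refine mul_left_cancel₀ hr.ne' ?_
  linear_combination hode

theorem flux_eq_zero (h : IsBesselSolution κ m a a' a'') (ha : ContinuousOn a (Ici 0))
    (ha' : ContinuousOn a' (Ici 0)) {r : ℝ} (hr : 0 < r) : (conj (a r) * a' r).im = 0 := by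
  have hcont : ContinuousOn (fun s ↦ s * (conj (a s) * a' s).im) (Icc 0 r) :=
    (continuousOn_id.mul (Complex.continuous_im.comp_continuousOn
      ((Complex.continuous_conj.comp_continuousOn ha).mul ha'))).mono Icc_subset_Ici_self
  obtain ⟨_, _, hslope⟩ := exists_hasDerivAt_eq_slope (fun s ↦ s * (conj (a s) * a' s).im) 0 hr
    hcont fun s hs ↦ h.hasDerivAt_flux hs.1
  simpa [hr.ne'] using hslope.symm

end Radiation

end IsBesselSolution

theorem norm_sub_I_mul_sq (κ : ℝ) (z w : ℂ) :
    ‖w - Complex.I * κ * z‖ ^ 2 = ‖w‖ ^ 2 + κ ^ 2 * ‖z‖ ^ 2 - 2 * κ * (conj z * w).im := by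
  simp only [← Complex.normSq_eq_norm_sq, Complex.normSq_apply, Complex.sub_re, Complex.sub_im,
    Complex.mul_re, Complex.mul_im, Complex.I_re, Complex.I_im, Complex.ofReal_re,
    Complex.ofReal_im, Complex.conj_re, Complex.conj_im]
  ring

theorem IsBesselSolution.eq_zero_of_radiating {κ m : ℝ} {a a' a'' : ℝ → ℂ} (hκ : κ ≠ 0)
    (h : IsBesselSolution κ m a a' a'')
    (ha : ContinuousOn a (Ici 0)) (ha' : ContinuousOn a' (Ici 0))
    (hrad : Tendsto (fun r ↦ r * ‖a' r - Complex.I * κ * a r‖ ^ 2) atTop (𝓝 0)) :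
    ∀ r > 0, a r = 0 := by
  refine h.eq_zero_of_tendsto_mul_waveEnergy hκ (hrad.congr' ?_)
  filter_upwards [eventually_gt_atTop 0] with r hr
  rw [norm_sub_I_mul_sq, h.flux_eq_zero ha ha' hr, mul_zero, sub_zero, waveEnergy]

section FourierCoefficients

variable {E : Type*} [NormedAddCommGroup E] [NormedSpace ℂ E] {a b : ℝ}

theorem continuous_fourier_coe (T : ℝ) (n : ℤ) :
    Continuous fun x : ℝ ↦ fourier n (x : AddCircle T) :=
  (map_continuous (fourier n)).comp (AddCircle.continuous_mk' T)

theorem fourierCoeffOn_sub (hab : a < b) {f g : ℝ → E} (hf : IntervalIntegrable f volume a b)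
    (hg : IntervalIntegrable g volume a b) (n : ℤ) :
    fourierCoeffOn hab (fun x ↦ f x - g x) n = fourierCoeffOn hab f n - fourierCoeffOn hab g n := by
  have hχ := (continuous_fourier_coe (b - a) (-n)).continuousOn (s := [[a, b]])
  simp only [fourierCoeffOn_eq_integral, smul_sub]
  rw [intervalIntegral.integral_sub (hf.continuousOn_smul hχ) (hg.continuousOn_smul hχ), smul_sub]

theorem norm_fourierCoeffOn_le (hab : a < b) {f : ℝ → E} {C : ℝ}
    (hf : ∀ x ∈ Ioc a b, ‖f x‖ ≤ C) (n : ℤ) :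
    ‖fourierCoeffOn hab f n‖ ≤ C := by
  have hba : 0 < b - a := sub_pos.2 hab
  have hint : ‖∫ x in a..b, fourier (-n) (x : AddCircle (b - a)) • f x‖ ≤ C * |b - a| := by
    refine intervalIntegral.norm_integral_le_of_norm_le_const fun x hx ↦ ?_
    rw [norm_smul, fourier_apply, Circle.norm_coe, one_mul]
    exact hf x (by rwa [uIoc_of_le hab.le] at hx)
  rw [fourierCoeffOn_eq_integral, norm_smul, Real.norm_of_nonneg (by positivity), one_div,
    inv_mul_le_iff₀ hba, mul_comm]
  rwa [abs_of_pos hba] at hint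

theorem fourierCoeffOn_deriv_of_eq_endpoints (hab : a < b) {f f' : ℝ → ℂ}
    (hf : ∀ x ∈ [[a, b]], HasDerivAt f (f' x) x) (hf' : IntervalIntegrable f' volume a b)
    (hfab : f a = f b) (n : ℤ) :
    fourierCoeffOn hab f' n = 2 * π * Complex.I * n / (b - a) * fourierCoeffOn hab f n := by
  rcases eq_or_ne n 0 with rfl | hn
  · have hint : ∫ x in a..b, f' x = 0 := by
      rw [intervalIntegral.integral_eq_sub_of_hasDerivAt hf hf', hfab, sub_self]
    simp [fourierCoeffOn_eq_integral, hint]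
  · have hba : (b - a : ℂ) ≠ 0 := by exact_mod_cast (sub_pos.2 hab).ne'
    have hn' : (n : ℂ) ≠ 0 := by exact_mod_cast hn
    have hπ : (π : ℂ) ≠ 0 := by exact_mod_cast Real.pi_ne_zero
    rw [fourierCoeffOn_of_hasDerivAt hab hn hf hf', hfab, sub_self, mul_zero]
    field_simp [Complex.I_ne_zero]
    ring

theorem eqOn_zero_of_fourierCoeffOn_eq_zero (hab : a < b) {f : ℝ → ℂ}
    (hf : ContinuousOn f (Icc a b)) (hfab : f a = f b) (h : ∀ n, fourierCoeffOn hab f n = 0) :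
    EqOn f 0 (Ioc a b) := by
  have : Fact (0 < b - a) := ⟨sub_pos.2 hab⟩
  have hb : a + (b - a) = b := add_sub_cancel a b
  let G : C(AddCircle (b - a), ℂ) :=
    ⟨AddCircle.liftIoc (b - a) a f, AddCircle.liftIoc_continuous (by rwa [hb]) (by rwa [hb])⟩
  have hG : fourierCoeff G = 0 := funext h
  intro x hx
  have hsum := has_pointwise_sum_fourier_series_of_summable (f := G)
    (by rw [hG]; exact summable_zero) x
  simp only [hG, Pi.zero_apply, zero_smul] at hsum
  rw [← AddCircle.liftIoc_coe_apply (p := b - a) (a := a) (f := f) (by rwa [hb])]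
  exact hsum.unique hasSum_zero

theorem fourierCoeffOn_neg_pi_pi_deriv_deriv {f f' f'' : ℝ → ℂ}
    (hf : ∀ θ, HasDerivAt f (f' θ) θ) (hf' : ∀ θ, HasDerivAt f' (f'' θ) θ)
    (hf'' : IntervalIntegrable f'' volume (-π) π) (hfπ : f (-π) = f π) (hfπ' : f' (-π) = f' π)
    (n : ℤ) :
    fourierCoeffOn (neg_lt_self Real.pi_pos) f'' n =
      -(n : ℂ) ^ 2 * fourierCoeffOn (neg_lt_self Real.pi_pos) f n := by
  have hcont : Continuous f' := continuous_iff_continuousAt.2 fun θ ↦ (hf' θ).continuousAt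
  have hπ : (π : ℂ) ≠ 0 := by exact_mod_cast Real.pi_ne_zero
  have hfactor : 2 * π * Complex.I * n / ((π : ℝ) - (-π : ℝ) : ℂ) = Complex.I * n := by
    push_cast
    field_simp
    ring
  rw [fourierCoeffOn_deriv_of_eq_endpoints _ (fun θ _ ↦ hf' θ) hf'' hfπ',
    fourierCoeffOn_deriv_of_eq_endpoints _ (fun θ _ ↦ hf θ) (hcont.intervalIntegrable _ _)
      hfπ, hfactor]
  linear_combination (n : ℂ) ^ 2 * fourierCoeffOn (neg_lt_self Real.pi_pos) f n * Complex.I_sq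

theorem hasDerivAt_intervalIntegral_of_continuous {F : Type*} [NormedAddCommGroup F]
    [NormedSpace ℝ F] {f f' : ℝ → ℝ → F} (hf : Continuous (Function.uncurry f))
    (hf' : Continuous (Function.uncurry f'))
    (hderiv : ∀ r t, HasDerivAt (fun s ↦ f s t) (f' r t) r) (a b r : ℝ) :
    HasDerivAt (fun s ↦ ∫ t in a..b, f s t) (∫ t in a..b, f' r t) r := by
  obtain ⟨C, hC⟩ := ((isCompact_closedBall r 1).prod
    (isCompact_uIcc (a := a) (b := b))).exists_bound_of_continuousOn hf'.continuousOn
  refine (intervalIntegral.hasDerivAt_integral_of_dominated_loc_of_deriv_le (bound := fun _ ↦ C)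
    (Metric.closedBall_mem_nhds r one_pos)
    (.of_forall fun s ↦ (hf.uncurry_left s).aestronglyMeasurable)
    ((hf.uncurry_left r).intervalIntegrable a b) (hf'.uncurry_left r).aestronglyMeasurable
    ?_ (by simp) ?_).2
  · exact .of_forall fun t ht s hs ↦ hC (s, t) ⟨hs, uIoc_subset_uIcc ht⟩
  · exact .of_forall fun t _ s _ ↦ hderiv s t

theorem hasDerivAt_fourierCoeffOn (hab : a < b) {f f' : ℝ → ℝ → E}
    (hf : Continuous (Function.uncurry f)) (hf' : Continuous (Function.uncurry f'))
    (hderiv : ∀ r t, HasDerivAt (fun s ↦ f s t) (f' r t) r) (n : ℤ) (r : ℝ) :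
    HasDerivAt (fun s ↦ fourierCoeffOn hab (f s) n) (fourierCoeffOn hab (f' r) n) r := by
  have hχ := (continuous_fourier_coe (b - a) (-n)).comp continuous_snd (X := ℝ × ℝ)
  simp only [fourierCoeffOn_eq_integral]
  exact (hasDerivAt_intervalIntegral_of_continuous
    (f := fun s t ↦ fourier (-n) (t : AddCircle (b - a)) • f s t)
    (f' := fun s t ↦ fourier (-n) (t : AddCircle (b - a)) • f' s t) (hχ.smul hf) (hχ.smul hf')
    (fun s t ↦ (hderiv s t).const_smul _) a b r).const_smul _

end FourierCoefficients

section PolarCoordinates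

/-- The radial unit vector `(cos θ, sin θ)`; polar coordinates are `x = r • radialUnit θ`. -/
def radialUnit (θ : ℝ) : ℝ² :=
  Real.cos θ • EuclideanSpace.single 0 1 + Real.sin θ • EuclideanSpace.single 1 1

/-- The angular unit vector `(-sin θ, cos θ)`, completing `radialUnit θ` to the polar frame. -/
def angularUnit (θ : ℝ) : ℝ² :=
  -Real.sin θ • EuclideanSpace.single 0 1 + Real.cos θ • EuclideanSpace.single 1 1

theorem hasDerivAt_radialUnit (θ : ℝ) : HasDerivAt radialUnit (angularUnit θ) θ :=
  ((Real.hasDerivAt_cos θ).smul_const _).add ((Real.hasDerivAt_sin θ).smul_const _)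

theorem hasDerivAt_angularUnit (θ : ℝ) : HasDerivAt angularUnit (-radialUnit θ) θ := by
  refine (((Real.hasDerivAt_sin θ).neg.smul_const _).add
    ((Real.hasDerivAt_cos θ).smul_const _)).congr_deriv ?_
  rw [radialUnit, neg_smul, neg_smul, neg_add]

@[fun_prop]
theorem continuous_radialUnit : Continuous radialUnit :=
  continuous_iff_continuousAt.2 fun θ ↦ (hasDerivAt_radialUnit θ).continuousAt

@[fun_prop]
theorem continuous_angularUnit : Continuous angularUnit :=
  continuous_iff_continuousAt.2 fun θ ↦ (hasDerivAt_angularUnit θ).continuousAt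

theorem radialUnit_neg_pi : radialUnit (-π) = radialUnit π := by
  simp [radialUnit]

theorem angularUnit_neg_pi : angularUnit (-π) = angularUnit π := by
  simp [angularUnit]

theorem norm_radialUnit (θ : ℝ) : ‖radialUnit θ‖ = 1 := by
  rw [EuclideanSpace.norm_eq, Real.sqrt_eq_one]
  simp [radialUnit, Fin.sum_univ_two]

theorem exists_eq_norm_smul_radialUnit (x : ℝ²) : ∃ θ ∈ Ioc (-π) π, x = ‖x‖ • radialUnit θ := by
  have hnorm : ‖x‖ = ‖(⟨x 0, x 1⟩ : ℂ)‖ := by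
    rw [EuclideanSpace.norm_eq, Complex.norm_eq_sqrt_sq_add_sq]
    simp [Fin.sum_univ_two]
  refine ⟨Complex.arg ⟨x 0, x 1⟩, Complex.arg_mem_Ioc _, ?_⟩
  ext i
  fin_cases i
  · simp [radialUnit, hnorm, Complex.norm_mul_cos_arg]
  · simp [radialUnit, hnorm, Complex.norm_mul_sin_arg]

theorem trace_polarFrame {F : Type*} [NormedAddCommGroup F] [NormedSpace ℝ F]
    (B : ℝ² →L[ℝ] ℝ² →L[ℝ] F) (θ : ℝ) :
    B (radialUnit θ) (radialUnit θ) + B (angularUnit θ) (angularUnit θ) =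
      ∑ i, B (EuclideanSpace.single i 1) (EuclideanSpace.single i 1) := by
  simp only [radialUnit, angularUnit, map_add, map_smul, add_apply, smul_apply, Fin.sum_univ_two]
  match_scalars <;> first | ring1 | linear_combination Real.cos_sq_add_sin_sq θ

theorem lap_eq_trace_fderiv_fderiv {v : ℝ² → ℂ} {x : ℝ²}
    (hv : DifferentiableAt ℝ (fderiv ℝ v) x) :
    lap v x =
      ∑ i, fderiv ℝ (fderiv ℝ v) x (EuclideanSpace.single i 1) (EuclideanSpace.single i 1) := by
  refine Finset.sum_congr rfl fun i _ ↦ ?_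
  rw [(hv.hasFDerivAt.clm_apply (hasFDerivAt_const _ x)).fderiv]
  simp

theorem lap_eq_polarFrame {v : ℝ² → ℂ} {x : ℝ²} (hv : DifferentiableAt ℝ (fderiv ℝ v) x)
    (θ : ℝ) :
    lap v x = fderiv ℝ (fderiv ℝ v) x (radialUnit θ) (radialUnit θ) +
      fderiv ℝ (fderiv ℝ v) x (angularUnit θ) (angularUnit θ) := by
  rw [lap_eq_trace_fderiv_fderiv hv, trace_polarFrame]

section PolarDerivatives

variable {E F : Type*} [NormedAddCommGroup E] [NormedSpace ℝ E] [NormedAddCommGroup F]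
  [NormedSpace ℝ F]

theorem hasDerivAt_comp_smul_const {f : E → F} (x : E) {r : ℝ}
    (hf : DifferentiableAt ℝ f (r • x)) :
    HasDerivAt (fun s : ℝ ↦ f (s • x)) (fderiv ℝ f (r • x) x) r :=
  (hf.hasFDerivAt.comp_hasDerivAt r ((hasDerivAt_id' r).smul_const x)).congr_deriv (by
    rw [one_smul])

theorem hasDerivAt_fderiv_comp_smul_const {f : E → F} (x : E) {r : ℝ}
    (hf : DifferentiableAt ℝ (fderiv ℝ f) (r • x)) :
    HasDerivAt (fun s : ℝ ↦ fderiv ℝ f (s • x) x) (fderiv ℝ (fderiv ℝ f) (r • x) x x) r := by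
  simpa using (hasDerivAt_comp_smul_const x hf).clm_apply (hasDerivAt_const r x)

theorem hasDerivAt_comp_smul_radialUnit {f : ℝ² → F} {r θ : ℝ}
    (hf : DifferentiableAt ℝ f (r • radialUnit θ)) :
    HasDerivAt (fun t ↦ f (r • radialUnit t))
      (fderiv ℝ f (r • radialUnit θ) (r • angularUnit θ)) θ :=
  hf.hasFDerivAt.comp_hasDerivAt θ ((hasDerivAt_radialUnit θ).const_smul r)

theorem hasDerivAt_fderiv_comp_smul_radialUnit {f : ℝ² → F} {r θ : ℝ}
    (hf : DifferentiableAt ℝ (fderiv ℝ f) (r • radialUnit θ)) :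
    HasDerivAt (fun t ↦ fderiv ℝ f (r • radialUnit t) (r • angularUnit t))
      (fderiv ℝ (fderiv ℝ f) (r • radialUnit θ) (r • angularUnit θ) (r • angularUnit θ) +
        fderiv ℝ f (r • radialUnit θ) (r • -radialUnit θ)) θ :=
  (hasDerivAt_comp_smul_radialUnit hf).clm_apply ((hasDerivAt_angularUnit θ).const_smul r)

end PolarDerivatives

/-- The `n`-th Fourier coefficient in `θ ∈ [-π, π]` of a function `u r θ` of polar coordinates, as
a function of the radius. -/
def angularMode (n : ℤ) (u : ℝ → ℝ → ℂ) (r : ℝ) : ℂ :=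
  fourierCoeffOn (neg_lt_self Real.pi_pos) (u r) n

theorem hasDerivAt_angularMode_radial {v : ℝ² → ℂ} (hv : ContDiff ℝ 1 v) (n : ℤ) (r : ℝ) :
    HasDerivAt (angularMode n fun r θ ↦ v (r • radialUnit θ))
      (angularMode n (fun r θ ↦ fderiv ℝ v (r • radialUnit θ) (radialUnit θ)) r) r := by
  exact hasDerivAt_fourierCoeffOn _ (by fun_prop) (by fun_prop)
    (fun r θ ↦ hasDerivAt_comp_smul_const _ (hv.differentiable one_ne_zero _)) n r

theorem hasDerivAt_angularMode_radial_deriv {v : ℝ² → ℂ} (hv : ContDiff ℝ 2 v) (n : ℤ) (r : ℝ) :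
    HasDerivAt (angularMode n fun r θ ↦ fderiv ℝ v (r • radialUnit θ) (radialUnit θ))
      (angularMode n (fun r θ ↦
        fderiv ℝ (fderiv ℝ v) (r • radialUnit θ) (radialUnit θ) (radialUnit θ)) r) r := by
  have hD : ContDiff ℝ 1 (fderiv ℝ v) := hv.fderiv_right (by norm_num)
  exact hasDerivAt_fourierCoeffOn _ (by fun_prop) (by fun_prop)
    (fun r θ ↦ hasDerivAt_fderiv_comp_smul_const _ (hD.differentiable one_ne_zero _)) n r

end PolarCoordinates

section HelmholtzModes

variable {κ : ℝ} {v : ℝ² → ℂ}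

theorem angular_deriv_deriv_eq_of_helmholtz {r θ : ℝ}
    (hv : DifferentiableAt ℝ (fderiv ℝ v) (r • radialUnit θ))
    (hHelm : lap v (r • radialUnit θ) + (κ : ℂ) ^ 2 * v (r • radialUnit θ) = 0) :
    fderiv ℝ (fderiv ℝ v) (r • radialUnit θ) (r • angularUnit θ) (r • angularUnit θ) +
        fderiv ℝ v (r • radialUnit θ) (r • -radialUnit θ) =
      -(r : ℂ) ^ 2 * fderiv ℝ (fderiv ℝ v) (r • radialUnit θ) (radialUnit θ) (radialUnit θ) -
        r * fderiv ℝ v (r • radialUnit θ) (radialUnit θ) -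
          (κ : ℂ) ^ 2 * (r : ℂ) ^ 2 * v (r • radialUnit θ) := by
  rw [lap_eq_polarFrame hv θ] at hHelm
  simp only [map_smul, map_neg, smul_apply, Complex.real_smul]
  linear_combination (r : ℂ) ^ 2 * hHelm

theorem isBesselSolution_angularMode (hv : ContDiff ℝ 2 v)
    (hHelm : ∀ x, lap v x + (κ : ℂ) ^ 2 * v x = 0) (n : ℤ) :
    IsBesselSolution κ (n ^ 2) (angularMode n fun r θ ↦ v (r • radialUnit θ))
      (angularMode n fun r θ ↦ fderiv ℝ v (r • radialUnit θ) (radialUnit θ))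
      (angularMode n fun r θ ↦
        fderiv ℝ (fderiv ℝ v) (r • radialUnit θ) (radialUnit θ) (radialUnit θ)) where
  hasDerivAt r _ := hasDerivAt_angularMode_radial (hv.of_le one_le_two) n r
  hasDerivAt_deriv r _ := hasDerivAt_angularMode_radial_deriv hv n r
  equation r _ := by
    have hD : ContDiff ℝ 1 (fderiv ℝ v) := hv.fderiv_right (by norm_num)
    have hdiff := hD.differentiable one_ne_zero
    have hcoeff := fourierCoeffOn_neg_pi_pi_deriv_deriv
      (fun θ ↦ hasDerivAt_comp_smul_radialUnit (r := r) (hv.differentiable two_ne_zero _))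
      (fun θ ↦ hasDerivAt_fderiv_comp_smul_radialUnit (r := r) (hdiff _))
      (Continuous.intervalIntegrable (by fun_prop) _ _)
      (by rw [radialUnit_neg_pi]) (by rw [radialUnit_neg_pi, angularUnit_neg_pi]) n
    simp only [angular_deriv_deriv_eq_of_helmholtz (hdiff _) (hHelm _)] at hcoeff
    rw [fourierCoeffOn_sub _ (Continuous.intervalIntegrable (by fun_prop) _ _)
        (Continuous.intervalIntegrable (by fun_prop) _ _),
      fourierCoeffOn_sub _ (Continuous.intervalIntegrable (by fun_prop) _ _)
        (Continuous.intervalIntegrable (by fun_prop) _ _), fourierCoeffOn.const_mul,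
      fourierCoeffOn.const_mul, fourierCoeffOn.const_mul] at hcoeff
    simp only [angularMode, Complex.real_smul]
    push_cast
    linear_combination -hcoeff

theorem SommerfeldRadiation.eventually_radial (hrad : SommerfeldRadiation κ v) {ε : ℝ}
    (hε : 0 < ε) :
    ∀ᶠ r in atTop, ∀ θ, √r * ‖fderiv ℝ v (r • radialUnit θ) (radialUnit θ) -
      Complex.I * κ * v (r • radialUnit θ)‖ ≤ ε := by
  obtain ⟨R, hR, hv⟩ := hrad ε hε
  filter_upwards [eventually_ge_atTop R] with r hr θ
  have hr0 : 0 < r := hR.trans_le hr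
  have hnorm : ‖r • radialUnit θ‖ = r := by
    rw [norm_smul, norm_radialUnit, mul_one, Real.norm_of_nonneg hr0.le]
  have hx := hv (r • radialUnit θ) (by rwa [hnorm])
  rwa [hnorm, inv_smul_smul₀ hr0.ne'] at hx

theorem SommerfeldRadiation.tendsto_mul_norm_sq_angularMode (hrad : SommerfeldRadiation κ v)
    (hv : ContDiff ℝ 1 v) (n : ℤ) :
    Tendsto (fun r ↦ r *
      ‖angularMode n (fun r θ ↦ fderiv ℝ v (r • radialUnit θ) (radialUnit θ)) r -
        Complex.I * κ * angularMode n (fun r θ ↦ v (r • radialUnit θ)) r‖ ^ 2) atTop (𝓝 0) := by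
  have hsub : ∀ r : ℝ, angularMode n (fun r θ ↦ fderiv ℝ v (r • radialUnit θ) (radialUnit θ)) r -
      Complex.I * κ * angularMode n (fun r θ ↦ v (r • radialUnit θ)) r =
      angularMode n (fun r θ ↦ fderiv ℝ v (r • radialUnit θ) (radialUnit θ) -
        Complex.I * κ * v (r • radialUnit θ)) r := by
    intro r
    simp only [angularMode]
    rw [fourierCoeffOn_sub _ (Continuous.intervalIntegrable (by fun_prop) _ _)
      (Continuous.intervalIntegrable (by fun_prop) _ _), fourierCoeffOn.const_mul]
  simp only [hsub]
  have hlim : Tendsto (fun r ↦ √r * ‖angularMode n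
      (fun r θ ↦ fderiv ℝ v (r • radialUnit θ) (radialUnit θ) -
        Complex.I * κ * v (r • radialUnit θ)) r‖) atTop (𝓝 0) := by
    refine Metric.nhds_basis_closedBall.tendsto_right_iff.2 fun ε hε ↦ ?_
    filter_upwards [hrad.eventually_radial hε, eventually_gt_atTop 0] with r hrε hr
    have hs : 0 < √r := Real.sqrt_pos.2 hr
    rw [mem_closedBall_zero_iff, Real.norm_of_nonneg (by positivity), ← le_div_iff₀' hs]
    exact norm_fourierCoeffOn_le _ (fun θ _ ↦ (le_div_iff₀' hs).2 (hrε θ)) n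
  have hsq := hlim.pow 2
  rw [zero_pow two_ne_zero] at hsq
  refine hsq.congr' ?_
  filter_upwards [eventually_ge_atTop 0] with r hr
  rw [mul_pow, Real.sq_sqrt hr]

theorem eq_zero_of_angularMode_eq_zero (hv : Continuous v)
    (h : ∀ n, ∀ r > 0, angularMode n (fun r θ ↦ v (r • radialUnit θ)) r = 0) (x : ℝ²) :
    v x = 0 := by
  have hpunctured : EqOn v 0 {0}ᶜ := by
    intro y hy
    obtain ⟨θ, hθ, hyθ⟩ := exists_eq_norm_smul_radialUnit y
    have hzero := eqOn_zero_of_fourierCoeffOn_eq_zero (neg_lt_self Real.pi_pos)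
      (f := fun t ↦ v (‖y‖ • radialUnit t)) (by fun_prop) (by rw [radialUnit_neg_pi])
      (fun n ↦ h n ‖y‖ (norm_pos_iff.2 hy)) hθ
    rwa [hyθ]
  exact congrFun (Continuous.ext_on (dense_compl_singleton 0) hv continuous_const hpunctured) x

end HelmholtzModes

theorem entire_radiating_solution_is_zero_general {κ : ℝ} (hκ : κ ≠ 0) {v : ℝ² → ℂ}
    (hv : ContDiff ℝ 2 v) (hHelm : ∀ x, lap v x + (κ : ℂ) ^ 2 * v x = 0)
    (hrad : SommerfeldRadiation κ v) (x : ℝ²) : v x = 0 :=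
  eq_zero_of_angularMode_eq_zero hv.continuous (fun n ↦
    (isBesselSolution_angularMode hv hHelm n).eq_zero_of_radiating hκ
      (continuous_iff_continuousAt.2 fun r ↦
        (hasDerivAt_angularMode_radial (hv.of_le one_le_two) n r).continuousAt).continuousOn
      (continuous_iff_continuousAt.2 fun r ↦
        (hasDerivAt_angularMode_radial_deriv hv n r).continuousAt).continuousOn
      (hrad.tendsto_mul_norm_sq_angularMode (hv.of_le one_le_two) n)) x

/-- An entire (C² on all of `ℝ²`) solution of the Helmholtz equation that satisfies the
Sommerfeld radiation condition vanishes identically. -/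
theorem entire_radiating_solution_is_zero (κ : ℝ) (hκ : 0 < κ)
    (v : EuclideanSpace ℝ (Fin 2) → ℂ)
    (hv : ContDiff ℝ 2 v)
    (hHelm : ∀ x, lap v x + (κ : ℂ) ^ 2 * v x = 0)
    (hrad : SommerfeldRadiation κ v) :
    ∀ x, v x = 0 :=
  entire_radiating_solution_is_zero_general hκ.ne' hv hHelm hrad

end
end

section
/- (Weak uniqueness, Theorem 3.1.) Let κ > 0 and let D₁, D₂ ⊆ ℝ² be bounded open sets such that ℝ² \ (cl(D₁) ∪ cl(D₂)) is connected. For i = 1, 2 let vᵢ : ℝ² → ℂ be of class C² on ℝ² \ cl(Dᵢ), satisfy Δvᵢ + κ²vᵢ = 0 there, and satisfy the Sommerfeld radiation condition for wavenumber κ. Suppose there exists a continuous function v∞ : S¹ → ℂ that is the far-field pattern of both v₁ and v₂, and suppose v∞ is not identically zero on S¹. Then the closures of the two obstacles must intersect: cl(D₁) ∩ cl(D₂) ≠ ∅. -/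
noncomputable section

/-- The normalizing constant `c_κ = e^{iπ/4}/√(8πκ)`. -/
def farFieldConst (κ : ℝ) : ℂ :=
  Complex.exp (Complex.I * Real.pi / 4) / (Real.sqrt (8 * Real.pi * κ) : ℂ)

/-- `vInf` is the far-field pattern of `v` for wavenumber `κ`:
`sup_{‖θ‖=1} |r^{1/2} e^{−iκr} v(rθ) − c_κ vInf(θ)| → 0` as `r → ∞`. -/
def IsFarFieldPattern (κ : ℝ) (v vInf : EuclideanSpace ℝ (Fin 2) → ℂ) : Prop :=
  ∀ ε > (0 : ℝ), ∃ R₀ : ℝ, ∀ r : ℝ, R₀ ≤ r →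
    ∀ θ : EuclideanSpace ℝ (Fin 2), ‖θ‖ = 1 →
      ‖(Real.sqrt r : ℂ) * Complex.exp (-Complex.I * κ * r) * v (r • θ)
        - farFieldConst κ * vInf θ‖ ≤ ε

/-!
In polar coordinates the `n`-th Fourier coefficient of a Helmholtz solution on the circle of radius
`r`, multiplied by `√r`, solves `f'' = (c / r ^ 2 - κ ^ 2) f` with `c = n ^ 2 - 1 / 4`. Since
`c / r ^ 2` is integrable at infinity, `f` vanishes if its energy `‖f'‖ ^ 2 + κ ^ 2 ‖f‖ ^ 2` tends
to `0` there, and convergence of `exp (-iκr) f` forces `f' - iκf → 0`. A vanishing far field thus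
makes all modes vanish (Rellich), and unique continuation turns equality of the far fields into
`v₁ = v₂` outside both obstacles. If the obstacles were disjoint, `v₁` and `v₂` would glue to an
entire solution `u`. The flux `⟪i f, f'⟫` of each mode of `u` is constant in `r` and vanishes at the
origin. Because `f' - iκf → 0`, a vanishing flux makes the energy tend to `0`, so `u = 0` and its
far field is zero.
-/

namespace PlanarHelmholtz

open Complex Filter MeasureTheory Topology
open scoped InnerProductSpace

local notation "ℝ²" => EuclideanSpace ℝ (Fin 2)

section RealAnalysis

lemma antitoneOn_mul_exp_neg {S : Set ℝ} (hS : Convex ℝ S) {E E' φ φ' : ℝ → ℝ}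
    (hE : ∀ r ∈ S, HasDerivAt E (E' r) r) (hφ : ∀ r ∈ S, HasDerivAt φ (φ' r) r)
    (hle : ∀ r ∈ S, E' r ≤ φ' r * E r) :
    AntitoneOn (fun r => E r * Real.exp (-φ r)) S := by
  have hderiv : ∀ r ∈ S, HasDerivAt (fun r => E r * Real.exp (-φ r))
      ((E' r - φ' r * E r) * Real.exp (-φ r)) r := fun r hr => by
    convert! (hE r hr).mul (hφ r hr).fun_neg.exp using 1
    ring
  refine antitoneOn_of_hasDerivWithinAt_nonpos hS
    (fun r hr => (hderiv r hr).continuousAt.continuousWithinAt)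
    (fun r hr => (hderiv r (interior_subset hr)).hasDerivWithinAt) fun r hr => ?_
  exact mul_nonpos_of_nonpos_of_nonneg (sub_nonpos.2 (hle r (interior_subset hr)))
    (Real.exp_pos _).le

lemma le_mul_exp_abs_of_abs_deriv_le {S : Set ℝ} (hS : Convex ℝ S) {E E' φ φ' : ℝ → ℝ}
    (hE : ∀ r ∈ S, HasDerivAt E (E' r) r) (hφ : ∀ r ∈ S, HasDerivAt φ (φ' r) r)
    (hle : ∀ r ∈ S, |E' r| ≤ φ' r * E r) {a b : ℝ} (ha : a ∈ S) (hb : b ∈ S) (hEa : 0 ≤ E a) :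
    E b ≤ E a * Real.exp |φ b - φ a| := by
  rcases le_total a b with hab | hba
  · have h := antitoneOn_mul_exp_neg hS hE hφ (fun r hr => (abs_le.1 (hle r hr)).2) ha hb hab
    calc E b = E b * Real.exp (-φ b) * Real.exp (φ b) := by
          rw [mul_assoc, ← Real.exp_add, neg_add_cancel, Real.exp_zero, mul_one]
      _ ≤ E a * Real.exp (-φ a) * Real.exp (φ b) := by gcongr
      _ = E a * Real.exp (φ b - φ a) := by rw [mul_assoc, ← Real.exp_add]; ring_nf
      _ ≤ E a * Real.exp |φ b - φ a| := by gcongr; exact le_abs_self _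
  · have h := antitoneOn_mul_exp_neg hS (fun r hr => (hE r hr).neg) (fun r hr => (hφ r hr).neg)
      (fun r hr => by simpa using neg_le.1 (abs_le.1 (hle r hr)).1) hb ha hba
    simp only [Pi.neg_apply, neg_neg, neg_mul, neg_le_neg_iff] at h
    calc E b = E b * Real.exp (φ b) * Real.exp (-φ b) := by
          rw [mul_assoc, ← Real.exp_add, add_neg_cancel, Real.exp_zero, mul_one]
      _ ≤ E a * Real.exp (φ a) * Real.exp (-φ b) := by gcongr
      _ = E a * Real.exp (-(φ b - φ a)) := by rw [mul_assoc, ← Real.exp_add]; ring_nf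
      _ ≤ E a * Real.exp |φ b - φ a| := by gcongr; exact neg_le_abs _

lemma eq_zero_of_tendsto_of_tendsto_deriv {E : Type*} [NormedAddCommGroup E] [NormedSpace ℝ E]
    {h h' : ℝ → E} {α β : E} (hderiv : ∀ᶠ r in atTop, HasDerivAt h (h' r) r)
    (hα : Tendsto h atTop (𝓝 α)) (hβ : Tendsto h' atTop (𝓝 β)) : β = 0 := by
  have hshift : Tendsto (fun r => h (r + 1) - h r - β) atTop (𝓝 (α - α - β)) :=
    ((hα.comp (tendsto_atTop_add_const_right _ 1 tendsto_id)).sub hα).sub_const β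
  have hzero : Tendsto (fun r => h (r + 1) - h r - β) atTop (𝓝 0) := by
    rw [Metric.tendsto_nhds]
    intro ε hε
    obtain ⟨B, hB⟩ := eventually_atTop.1
      (hderiv.and (Metric.tendsto_nhds.1 hβ (ε / 2) (half_pos hε)))
    filter_upwards [eventually_ge_atTop B] with r hr
    have hmv := (convex_Icc r (r + 1)).norm_image_sub_le_of_norm_hasDerivWithin_le
      (f := fun s => h s - s • β) (f' := fun s => h' s - β) (C := ε / 2)
      (fun s hs => by
        simpa using ((hB s (hr.trans hs.1)).1.fun_sub
          ((hasDerivAt_id' s).smul_const β)).hasDerivWithinAt)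
      (fun s hs => by simpa [dist_eq_norm] using (hB s (hr.trans hs.1)).2.le)
      (Set.left_mem_Icc.2 (by linarith)) (Set.right_mem_Icc.2 (by linarith))
    have hrw : h (r + 1) - (r + 1) • β - (h r - r • β) = h (r + 1) - h r - β := by module
    rw [hrw, add_sub_cancel_left, norm_one, mul_one] at hmv
    rw [dist_zero_right]
    linarith
  simpa using tendsto_nhds_unique hshift hzero

lemma exists_tendsto_of_deriv_eq_div_sq {A c : ℝ} {p h : ℝ → ℂ} {α : ℂ}
    (hp : ∀ r ∈ Set.Ioi A, HasDerivAt p ((c / r ^ 2) • h r) r)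
    (hcont : ContinuousOn h (Set.Ioi A)) (hα : Tendsto h atTop (𝓝 α)) :
    ∃ β, Tendsto p atTop (𝓝 β) := by
  obtain ⟨B, hB⟩ := eventually_atTop.1 (hα.norm.eventually_le_const (lt_add_one ‖α‖))
  set b := max (max A B) 1
  have hb : 0 < b := one_pos.trans_le (le_max_right _ _)
  have hsub : Set.Ioi b ⊆ Set.Ioi A :=
    Set.Ioi_subset_Ioi ((le_max_left _ _).trans (le_max_left _ _))
  have hdom : IntegrableOn (fun r : ℝ => |c| * (‖α‖ + 1) * r ^ (-2 : ℝ)) (Set.Ioi b) :=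
    (integrableOn_Ioi_rpow_of_lt (by norm_num) hb).const_mul _
  have hint : IntegrableOn (fun r => (c / r ^ 2) • h r) (Set.Ioi b) := by
    refine hdom.mono' (ContinuousOn.aestronglyMeasurable (fun r hr => ?_) measurableSet_Ioi) ?_
    · have hdiv : ContinuousAt (fun r : ℝ => c / r ^ 2) r :=
        continuousAt_const.div (by fun_prop) (pow_ne_zero 2 (hb.trans hr).ne')
      exact hdiv.continuousWithinAt.smul ((hcont r (hsub hr)).mono hsub)
    · refine (ae_restrict_iff' measurableSet_Ioi).2 (Eventually.of_forall fun r hr => ?_)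
      have hr0 : 0 < r := hb.trans hr
      have hhr : ‖h r‖ ≤ ‖α‖ + 1 :=
        hB r (((le_max_right _ _).trans (le_max_left _ _)).trans (le_of_lt hr))
      rw [norm_smul, Real.norm_eq_abs, abs_div, abs_of_pos (by positivity : 0 < r ^ 2),
        Real.rpow_neg hr0.le, Real.rpow_two, ← div_eq_mul_inv, div_mul_eq_mul_div]
      gcongr
  exact ⟨_, tendsto_limUnder_of_hasDerivAt_of_integrableOn_Ioi (fun r hr => hp r (hsub hr)) hint⟩

end RealAnalysis

lemma norm_exp_neg_I_mul_mul (κ r : ℝ) (z : ℂ) : ‖exp (-I * κ * r) * z‖ = ‖z‖ := by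
  rw [norm_mul, show -I * (κ : ℂ) * r = ((-(κ * r) : ℝ) : ℂ) * I by push_cast; ring,
    norm_exp_ofReal_mul_I, one_mul]

lemma real_inner_I_mul_self (z : ℂ) : ⟪I * z, z⟫_ℝ = 0 := by
  simp [Complex.inner, mul_comm]

/-- `f` solves `f'' = (c / r ^ 2 - κ ^ 2) f` on `S`, with derivative `g`. For `c = n ^ 2 - 1 / 4`
this is Bessel's equation of order `n` for `f / √r`, in Liouville normal form. -/
structure IsRadialSolution (κ c : ℝ) (S : Set ℝ) (f g : ℝ → ℂ) : Prop where
  hasDerivAt : ∀ r ∈ S, HasDerivAt f (g r) r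
  hasDerivAt_deriv : ∀ r ∈ S, HasDerivAt g ((c / r ^ 2 - κ ^ 2) • f r) r

/-- The energy of the oscillator `f'' = -κ ^ 2 f` with `g = f'`. -/
def radialEnergy (κ : ℝ) (f g : ℝ → ℂ) (r : ℝ) : ℝ := ‖g r‖ ^ 2 + κ ^ 2 * ‖f r‖ ^ 2

lemma eq_zero_of_radialEnergy_nonpos {κ : ℝ} (hκ : κ ≠ 0) {f g : ℝ → ℂ} {r : ℝ}
    (h : radialEnergy κ f g r ≤ 0) : f r = 0 := by
  by_contra hf
  have : 0 < ‖f r‖ := norm_pos_iff.2 hf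
  have : 0 < radialEnergy κ f g r := by unfold radialEnergy; positivity
  linarith

namespace IsRadialSolution

variable {κ c A : ℝ} {S : Set ℝ} {f g : ℝ → ℂ}

lemma hasDerivAt_radialEnergy (hfg : IsRadialSolution κ c S f g) {r : ℝ} (hr : r ∈ S) :
    HasDerivAt (radialEnergy κ f g) (2 * (c / r ^ 2) * ⟪g r, f r⟫_ℝ) r := by
  convert! (hfg.hasDerivAt_deriv r hr).norm_sq.add
    ((hfg.hasDerivAt r hr).norm_sq.const_mul (κ ^ 2)) using 1
  rw [real_inner_smul_right, real_inner_comm (f r) (g r)]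
  ring

lemma radialEnergy_le (hfg : IsRadialSolution κ c S f g) (hκ : κ ≠ 0) (hS : Convex ℝ S)
    (hpos : ∀ r ∈ S, 0 < r) {a b : ℝ} (ha : a ∈ S) (hb : b ∈ S) :
    radialEnergy κ f g b ≤ radialEnergy κ f g a * Real.exp (|c| / |κ| * |a⁻¹ - b⁻¹|) := by
  have : 0 < |κ| := abs_pos.2 hκ
  have hφ : ∀ r ∈ S, HasDerivAt (fun r => -(|c| / |κ|) * r⁻¹) (|c| / |κ| / r ^ 2) r :=
    fun r hr => by
      convert! (hasDerivAt_inv (hpos r hr).ne').const_mul (-(|c| / |κ|)) using 1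
      ring
  have hle : ∀ r ∈ S, |2 * (c / r ^ 2) * ⟪g r, f r⟫_ℝ| ≤
      |c| / |κ| / r ^ 2 * radialEnergy κ f g r := by
    intro r hr
    have hr0 := hpos r hr
    have hamgm : 2 * (|κ| * (‖g r‖ * ‖f r‖)) ≤ radialEnergy κ f g r := by
      rw [radialEnergy, ← sq_abs κ]
      nlinarith [sq_nonneg (‖g r‖ - |κ| * ‖f r‖)]
    calc |2 * (c / r ^ 2) * ⟪g r, f r⟫_ℝ| = 2 * (|c| / r ^ 2) * |⟪g r, f r⟫_ℝ| := by
          rw [abs_mul, abs_mul, abs_div, abs_two, abs_of_pos (by positivity : 0 < r ^ 2)]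
      _ ≤ 2 * (|c| / r ^ 2) * (‖g r‖ * ‖f r‖) := by gcongr; exact abs_real_inner_le_norm _ _
      _ = |c| / |κ| / r ^ 2 * (2 * (|κ| * (‖g r‖ * ‖f r‖))) := by field_simp
      _ ≤ |c| / |κ| / r ^ 2 * radialEnergy κ f g r := by gcongr
  have h := le_mul_exp_abs_of_abs_deriv_le hS (fun r hr => hfg.hasDerivAt_radialEnergy hr) hφ hle
    ha hb (by unfold radialEnergy; positivity)
  rwa [← mul_sub, abs_mul, abs_neg, abs_of_nonneg (by positivity : 0 ≤ |c| / |κ|),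
    abs_sub_comm] at h

lemma eq_zero_of_eq_zero (hfg : IsRadialSolution κ c S f g) (hκ : κ ≠ 0) (hS : Convex ℝ S)
    (hpos : ∀ r ∈ S, 0 < r) {a b : ℝ} (ha : a ∈ S) (hb : b ∈ S) (hfa : f a = 0) (hga : g a = 0) :
    f b = 0 := by
  have h := hfg.radialEnergy_le hκ hS hpos ha hb
  rw [show radialEnergy κ f g a = 0 by simp [radialEnergy, hfa, hga], zero_mul] at h
  exact eq_zero_of_radialEnergy_nonpos hκ h

lemma eq_zero_of_tendsto_radialEnergy_zero (hfg : IsRadialSolution κ c (Set.Ioi A) f g)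
    (hκ : κ ≠ 0) (hA : 0 ≤ A) (hE : Tendsto (radialEnergy κ f g) atTop (𝓝 0)) {r : ℝ} (hr : A < r) :
    f r = 0 := by
  have hlim : Tendsto (fun s => radialEnergy κ f g s * Real.exp (|c| / |κ| * |s⁻¹ - r⁻¹|)) atTop
      (𝓝 0) := by
    simpa using hE.mul
      (((tendsto_inv_atTop_zero.sub_const r⁻¹).abs.const_mul (|c| / |κ|)).rexp)
  have hle : radialEnergy κ f g r ≤ 0 := ge_of_tendsto hlim <| by
    filter_upwards [eventually_gt_atTop A] with s hs
    exact hfg.radialEnergy_le hκ (convex_Ioi A) (fun _ h => hA.trans_lt h) hs hr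
  exact eq_zero_of_radialEnergy_nonpos hκ hle

-- With `h = f e^{-iκr}` the equation reads `(h' + 2iκh)' = (c / r²) h`, whose right-hand side is
-- integrable; so `h'` has a limit, which vanishes because `h` converges.
lemma tendsto_deriv_sub_I_mul (hfg : IsRadialSolution κ c (Set.Ioi A) f g) {α : ℂ}
    (hα : Tendsto (fun r : ℝ => exp (-I * κ * r) * f r) atTop (𝓝 α)) :
    Tendsto (fun r => g r - I * κ * f r) atTop (𝓝 0) := by
  set h : ℝ → ℂ := fun r => exp (-I * κ * r) * f r
  set h' : ℝ → ℂ := fun r => exp (-I * κ * r) * (g r - I * κ * f r)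
  have hexp : ∀ r : ℝ, HasDerivAt (fun r : ℝ => exp (-I * κ * r)) (exp (-I * κ * r) * (-I * κ)) r :=
    fun r => by simpa using ((hasDerivAt_id r).ofReal_comp.const_mul (-I * κ)).cexp
  have hh : ∀ r ∈ Set.Ioi A, HasDerivAt h (h' r) r := fun r hr => by
    convert! (hexp r).mul (hfg.hasDerivAt r hr) using 1
    ring
  have hp : ∀ r ∈ Set.Ioi A,
      HasDerivAt (fun r => h' r + 2 * I * κ * h r) ((c / r ^ 2) • h r) r := fun r hr => by
    convert! ((hexp r).mul ((hfg.hasDerivAt_deriv r hr).fun_sub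
      ((hfg.hasDerivAt r hr).const_mul (I * κ)))).add ((hh r hr).const_mul (2 * I * κ)) using 1
    simp only [h, h', real_smul]
    push_cast
    linear_combination ((κ : ℂ) ^ 2 * exp (-I * κ * r) * f r) * I_sq
  obtain ⟨β, hβ⟩ := exists_tendsto_of_deriv_eq_div_sq hp
    (fun r hr => (hh r hr).continuousAt.continuousWithinAt) hα
  have hh' : Tendsto h' atTop (𝓝 (β - 2 * I * κ * α)) := by
    simpa using hβ.sub (hα.const_mul (2 * I * κ))
  rw [eq_zero_of_tendsto_of_tendsto_deriv ((eventually_gt_atTop A).mono hh) hα hh'] at hh'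
  refine tendsto_zero_iff_norm_tendsto_zero.2
    ((tendsto_zero_iff_norm_tendsto_zero.1 hh').congr fun r => ?_)
  rw [norm_exp_neg_I_mul_mul]

lemma eq_zero_of_tendsto_zero (hfg : IsRadialSolution κ c (Set.Ioi A) f g) (hκ : κ ≠ 0)
    (hA : 0 ≤ A) (h0 : Tendsto (fun r : ℝ => exp (-I * κ * r) * f r) atTop (𝓝 0)) {r : ℝ}
    (hr : A < r) : f r = 0 := by
  have hf : Tendsto f atTop (𝓝 0) := by
    refine tendsto_zero_iff_norm_tendsto_zero.2
      ((tendsto_zero_iff_norm_tendsto_zero.1 h0).congr fun r => ?_)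
    rw [norm_exp_neg_I_mul_mul]
  have hg : Tendsto g atTop (𝓝 0) := by
    simpa using (hfg.tendsto_deriv_sub_I_mul h0).add (hf.const_mul (I * κ))
  refine hfg.eq_zero_of_tendsto_radialEnergy_zero hκ hA ?_ hr
  unfold radialEnergy
  simpa using (hg.norm.pow 2).add ((hf.norm.pow 2).const_mul (κ ^ 2))

lemma inner_I_mul_eq (hfg : IsRadialSolution κ c S f g) (hS : IsOpen S) (hS' : IsPreconnected S)
    {a b : ℝ} (ha : a ∈ S) (hb : b ∈ S) : ⟪I * f a, g a⟫_ℝ = ⟪I * f b, g b⟫_ℝ := by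
  have hderiv : ∀ r ∈ S, HasDerivAt (fun r => ⟪I * f r, g r⟫_ℝ) 0 r := fun r hr => by
    convert! ((hfg.hasDerivAt r hr).const_mul I).inner ℝ (hfg.hasDerivAt_deriv r hr) using 1
    rw [real_inner_smul_right, real_inner_I_mul_self, real_inner_I_mul_self]
    ring
  exact hS.is_const_of_deriv_eq_zero hS'
    (fun r hr => (hderiv r hr).differentiableAt.differentiableWithinAt)
    (fun r hr => (hderiv r hr).deriv) ha hb

-- The flux `⟪i f, f'⟫` of an outgoing wave is positive: `‖f' - iκf‖ ^ 2` is the energy minus `2κ`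
-- times the flux, so a vanishing flux makes the energy tend to zero.
lemma eq_zero_of_inner_I_mul_eq_zero (hfg : IsRadialSolution κ c (Set.Ioi A) f g) (hκ : κ ≠ 0)
    (hA : 0 ≤ A) {α : ℂ} (hα : Tendsto (fun r : ℝ => exp (-I * κ * r) * f r) atTop (𝓝 α))
    (hflux : ∀ r ∈ Set.Ioi A, ⟪I * f r, g r⟫_ℝ = 0) {r : ℝ} (hr : A < r) : f r = 0 := by
  refine hfg.eq_zero_of_tendsto_radialEnergy_zero hκ hA ?_ hr
  have hlim : Tendsto (fun s => ‖g s - I * κ * f s‖ ^ 2) atTop (𝓝 0) := by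
    simpa using (hfg.tendsto_deriv_sub_I_mul hα).norm.pow 2
  refine hlim.congr' ?_
  filter_upwards [eventually_gt_atTop A] with s hs
  have hinner : ⟪g s, I * κ * f s⟫_ℝ = 0 := by
    rw [show I * κ * f s = κ • (I * f s) by rw [real_smul]; ring, real_inner_smul_right,
      real_inner_comm, hflux s hs, mul_zero]
  rw [norm_sub_sq_real, hinner, radialEnergy, norm_mul, norm_mul, norm_I, norm_real,
    Real.norm_eq_abs, one_mul, mul_pow, sq_abs]
  ring

end IsRadialSolution

section FourierCoefficients

lemma hasDerivAt_intervalIntegral_of_continuousOn {E : Type*} [NormedAddCommGroup E]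
    [NormedSpace ℝ E] {F F' : ℝ → ℝ → E} {S : Set ℝ} (hS : IsOpen S)
    (hF : ∀ r ∈ S, Continuous (F r)) (hderiv : ∀ r ∈ S, ∀ t, HasDerivAt (fun s => F s t) (F' r t) r)
    (hF' : ContinuousOn (Function.uncurry F') (S ×ˢ Set.univ)) {r : ℝ} (hr : r ∈ S) (a b : ℝ) :
    HasDerivAt (fun s => ∫ t in a..b, F s t) (∫ t in a..b, F' r t) r := by
  obtain ⟨δ, hδ, hδS⟩ := Metric.nhds_basis_closedBall.mem_iff.1 (hS.mem_nhds hr)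
  obtain ⟨M, hM⟩ := ((isCompact_closedBall r δ).prod
    (isCompact_uIcc (a := a) (b := b))).exists_bound_of_continuousOn
    (hF'.mono (Set.prod_mono hδS (Set.subset_univ _)))
  have hmem := Metric.closedBall_mem_nhds r hδ
  have hF'r : Continuous (F' r) :=
    hF'.comp_continuous (f := fun t => (r, t)) (by fun_prop) fun _ => ⟨hr, trivial⟩
  refine (intervalIntegral.hasDerivAt_integral_of_dominated_loc_of_deriv_le
    (bound := fun _ => M) hmem ?_ ((hF r hr).intervalIntegrable _ _)
    hF'r.aestronglyMeasurable ?_ (by simp) ?_).2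
  · filter_upwards [hmem] with s hs using (hF s (hδS hs)).aestronglyMeasurable
  · exact Eventually.of_forall fun t ht s hs => hM (s, t) ⟨hs, Set.uIoc_subset_uIcc ht⟩
  · exact Eventually.of_forall fun t _ s hs => hderiv s (hδS hs) t

/-- The `n`-th Fourier coefficient of a `2π`-periodic function, without the factor `1 / (2π)`. -/
def circleCoeff (n : ℤ) (F : ℝ → ℂ) : ℂ :=
  ∫ t in (0 : ℝ)..(2 * Real.pi), F t * exp (-I * n * t)

variable {n : ℤ} {F G : ℝ → ℂ}

@[simp]
lemma circleCoeff_zero (n : ℤ) : circleCoeff n 0 = 0 := by simp [circleCoeff]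

lemma circleCoeff_add (hF : Continuous F) (hG : Continuous G) :
    circleCoeff n (fun t => F t + G t) = circleCoeff n F + circleCoeff n G := by
  simp only [circleCoeff, add_mul]
  exact intervalIntegral.integral_add (Continuous.intervalIntegrable (by fun_prop) _ _)
    (Continuous.intervalIntegrable (by fun_prop) _ _)

lemma circleCoeff_const_mul (c : ℂ) (F : ℝ → ℂ) :
    circleCoeff n (fun t => c * F t) = c * circleCoeff n F := by
  simp only [circleCoeff, mul_assoc, intervalIntegral.integral_const_mul]

lemma circleCoeff_deriv {F' : ℝ → ℂ} (hF : ∀ t, HasDerivAt F (F' t) t) (hF' : Continuous F')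
    (hper : Function.Periodic F (2 * Real.pi)) :
    circleCoeff n F' = I * n * circleCoeff n F := by
  have hexp : ∀ t : ℝ, HasDerivAt (fun t : ℝ => exp (-I * n * t)) (exp (-I * n * t) * (-I * n)) t :=
    fun t => by simpa using ((hasDerivAt_id t).ofReal_comp.const_mul (-I * n)).cexp
  have hexp_period : exp (-I * n * ((2 * Real.pi : ℝ) : ℂ)) = 1 :=
    exp_eq_one_iff.2 ⟨-n, by push_cast; ring⟩
  have hparts := intervalIntegral.integral_mul_deriv_eq_deriv_mul (a := 0) (b := 2 * Real.pi)
    (fun t _ => hF t) (fun t _ => hexp t) (hF'.intervalIntegrable _ _)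
    (Continuous.intervalIntegrable (by fun_prop) _ _)
  have hcoeff : ∫ t in (0 : ℝ)..(2 * Real.pi), F t * (exp (-I * n * t) * (-I * n)) =
      -(I * n) * circleCoeff n F := by
    rw [← circleCoeff_const_mul, circleCoeff]
    exact intervalIntegral.integral_congr fun t _ => by ring
  rw [hcoeff, hexp_period, hper.eq, ← circleCoeff] at hparts
  simp only [ofReal_zero, mul_zero, exp_zero, sub_self, zero_sub] at hparts
  linear_combination hparts

lemma circleCoeff_deriv_deriv {F' F'' : ℝ → ℂ} (hF : ∀ t, HasDerivAt F (F' t) t)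
    (hF' : ∀ t, HasDerivAt F' (F'' t) t) (hF'' : Continuous F'')
    (hper : Function.Periodic F (2 * Real.pi)) (hper' : Function.Periodic F' (2 * Real.pi)) :
    circleCoeff n F'' = -(n : ℂ) ^ 2 * circleCoeff n F := by
  have hcont : Continuous F' := continuous_iff_continuousAt.2 fun t => (hF' t).continuousAt
  rw [circleCoeff_deriv hF' hF'' hper', circleCoeff_deriv hF hcont hper]
  linear_combination (n : ℂ) ^ 2 * circleCoeff n F * I_sq

lemma eq_zero_of_circleCoeff_eq_zero (hF : Continuous F)
    (hper : Function.Periodic F (2 * Real.pi)) (hzero : ∀ n, circleCoeff n F = 0) : F = 0 := by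
  have : Fact (0 < 2 * Real.pi) := ⟨Real.two_pi_pos⟩
  let φ : C(AddCircle (2 * Real.pi), ℂ) := ⟨hper.lift, continuous_coinduced_dom.2 hF⟩
  have hφ (t : ℝ) : φ t = F t := hper.lift_coe t
  have hcoeff : fourierCoeff φ = 0 := by
    ext n
    rw [fourierCoeff_eq_intervalIntegral φ n 0, Pi.zero_apply, smul_eq_zero]
    right
    rw [← hzero n, circleCoeff, zero_add]
    refine intervalIntegral.integral_congr fun t _ => ?_
    have hexponent : 2 * (Real.pi : ℂ) * I * (-n : ℤ) * t / (2 * Real.pi : ℝ) = -I * n * t := by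
      push_cast
      field_simp
    rw [hφ, smul_eq_mul, mul_comm, fourier_coe_apply, hexponent]
  funext t
  have hsum := has_pointwise_sum_fourier_series_of_summable (f := φ)
    (by rw [hcoeff]; exact summable_zero) t
  simp only [hcoeff, hφ, Pi.zero_apply, zero_smul] at hsum
  exact hsum.unique hasSum_zero

lemma tendsto_circleCoeff {ι : Type*} {l : Filter ι} [l.IsCountablyGenerated] {Φ : ι → ℝ → ℂ}
    (hΦ : ∀ᶠ i in l, Continuous (Φ i)) (hlim : TendstoUniformly Φ F l) :
    Tendsto (fun i => circleCoeff n (Φ i)) l (𝓝 (circleCoeff n F)) := by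
  refine TendstoUniformlyOn.tendsto_intervalIntegral_of_continuousOn ?_ ?_
  · filter_upwards [hΦ] with i hi
    fun_prop
  · rw [Metric.tendstoUniformlyOn_iff]
    intro ε hε
    filter_upwards [Metric.tendstoUniformly_iff.1 hlim ε hε] with i hi t _
    have hnorm : ‖exp (-I * n * t)‖ = 1 := by
      simpa using norm_exp_neg_I_mul_mul n t 1
    rw [dist_eq_norm, ← sub_mul, norm_mul, hnorm, mul_one, ← dist_eq_norm]
    exact hi t

end FourierCoefficients

section PolarFrame

/-- The unit vector `(cos t, sin t)`. -/
def eRadial (t : ℝ) : ℝ² :=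
  Real.cos t • EuclideanSpace.single 0 1 + Real.sin t • EuclideanSpace.single 1 1

/-- The unit vector `(-sin t, cos t)`, which is the derivative of `eRadial` and completes it to an
orthonormal frame. -/
def eAngular (t : ℝ) : ℝ² :=
  -Real.sin t • EuclideanSpace.single 0 1 + Real.cos t • EuclideanSpace.single 1 1

lemma hasDerivAt_eRadial (t : ℝ) : HasDerivAt eRadial (eAngular t) t :=
  ((Real.hasDerivAt_cos t).smul_const _).add ((Real.hasDerivAt_sin t).smul_const _)

lemma hasDerivAt_eAngular (t : ℝ) : HasDerivAt eAngular (-eRadial t) t := by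
  convert! ((Real.hasDerivAt_sin t).neg.smul_const (EuclideanSpace.single 0 1 : ℝ²)).add
    ((Real.hasDerivAt_cos t).smul_const (EuclideanSpace.single 1 1)) using 1
  rw [eRadial]
  module

@[fun_prop]
lemma continuous_eRadial : Continuous eRadial :=
  continuous_iff_continuousAt.2 fun t => (hasDerivAt_eRadial t).continuousAt

@[fun_prop]
lemma continuous_eAngular : Continuous eAngular :=
  continuous_iff_continuousAt.2 fun t => (hasDerivAt_eAngular t).continuousAt

lemma eRadial_periodic : Function.Periodic eRadial (2 * Real.pi) := fun t => by simp [eRadial]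

lemma eAngular_periodic : Function.Periodic eAngular (2 * Real.pi) := fun t => by simp [eAngular]

@[simp]
lemma norm_eRadial (t : ℝ) : ‖eRadial t‖ = 1 := by
  rw [EuclideanSpace.norm_eq]
  simp [eRadial]

lemma norm_smul_eRadial {r : ℝ} (hr : 0 ≤ r) (t : ℝ) : ‖r • eRadial t‖ = r := by
  rw [norm_smul, norm_eRadial, mul_one, Real.norm_of_nonneg hr]

lemma exists_norm_smul_eRadial (x : ℝ²) : ∃ t, ‖x‖ • eRadial t = x := by
  refine ⟨arg ⟨x 0, x 1⟩, ?_⟩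
  have hnorm : ‖x‖ = ‖(⟨x 0, x 1⟩ : ℂ)‖ := by
    rw [EuclideanSpace.norm_eq, norm_eq_sqrt_sq_add_sq]
    simp
  ext i
  fin_cases i <;> simp [hnorm, eRadial]

lemma exists_eRadial_eq {θ : ℝ²} (hθ : ‖θ‖ = 1) : ∃ t, eRadial t = θ := by
  simpa [hθ] using exists_norm_smul_eRadial θ

section Continuity

variable {E : Type*} [TopologicalSpace E] {w : ℝ² → E}

lemma continuousOn_comp_smul_eRadial {S : Set ℝ}
    (hw : ∀ r ∈ S, ∀ t, ContinuousAt w (r • eRadial t)) :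
    ContinuousOn (fun p : ℝ × ℝ => w (p.1 • eRadial p.2)) (S ×ˢ Set.univ) := fun p hp =>
  (ContinuousAt.comp (f := fun p : ℝ × ℝ => p.1 • eRadial p.2) (hw p.1 hp.1 p.2)
    (by fun_prop)).continuousWithinAt

lemma continuous_comp_smul_eRadial {r : ℝ} (hw : ∀ t, ContinuousAt w (r • eRadial t)) :
    Continuous fun t => w (r • eRadial t) :=
  continuous_iff_continuousAt.2 fun t =>
    ContinuousAt.comp (f := fun t => r • eRadial t) (hw t) (by fun_prop)

end Continuity

section Derivatives

variable {E F : Type*} [NormedAddCommGroup E] [NormedSpace ℝ E] [NormedAddCommGroup F]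
  [NormedSpace ℝ F] {u : E → F} {x : E}

lemma hasFDerivAt_of_contDiffAt (hu : ContDiffAt ℝ 2 u x) :
    HasFDerivAt u (fderiv ℝ u x) x :=
  (hu.differentiableAt (by norm_num)).hasFDerivAt

lemma hasFDerivAt_fderiv_of_contDiffAt (hu : ContDiffAt ℝ 2 u x) :
    HasFDerivAt (fderiv ℝ u) (fderiv ℝ (fderiv ℝ u) x) x :=
  ((hu.fderiv_right (m := 1) (by norm_num)).differentiableAt (by norm_num)).hasFDerivAt

lemma continuousAt_fderiv_of_contDiffAt (hu : ContDiffAt ℝ 2 u x) :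
    ContinuousAt (fderiv ℝ u) x :=
  (hasFDerivAt_fderiv_of_contDiffAt hu).continuousAt

lemma continuousAt_fderiv_fderiv_of_contDiffAt (hu : ContDiffAt ℝ 2 u x) :
    ContinuousAt (fderiv ℝ (fderiv ℝ u)) x :=
  ((hu.fderiv_right (m := 1) (by norm_num)).fderiv_right (m := 0) (by norm_num)).continuousAt

end Derivatives

variable {u : ℝ² → ℂ}

lemma lap_eq_eRadial_add_eAngular {x : ℝ²} (hu : ContDiffAt ℝ 2 u x) (t : ℝ) :
    lap u x = fderiv ℝ (fderiv ℝ u) x (eRadial t) (eRadial t) +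
      fderiv ℝ (fderiv ℝ u) x (eAngular t) (eAngular t) := by
  have hpartial (e : ℝ²) :
      fderiv ℝ (fun y => fderiv ℝ u y e) x e = fderiv ℝ (fderiv ℝ u) x e e := by
    rw [((hasFDerivAt_fderiv_of_contDiffAt hu).clm_apply (hasFDerivAt_const e x)).fderiv]
    simp
  have hcos : (Real.cos t : ℂ) ^ 2 = 1 - (Real.sin t : ℂ) ^ 2 := mod_cast Real.cos_sq' t
  simp only [lap, hpartial, Fin.sum_univ_two, eRadial, eAngular, map_add, map_smul,
    _root_.add_apply, _root_.smul_apply, smul_add, real_smul, ofReal_neg]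
  generalize fderiv ℝ (fderiv ℝ u) x = B
  linear_combination -(B (EuclideanSpace.single 0 1) (EuclideanSpace.single 0 1) +
    B (EuclideanSpace.single 1 1) (EuclideanSpace.single 1 1)) * hcos

lemma hasDerivAt_smul_eRadial_left (r t : ℝ) :
    HasDerivAt (fun s : ℝ => s • eRadial t) (eRadial t) r := by
  simpa using (hasDerivAt_id' r).smul_const (eRadial t)

lemma hasDerivAt_comp_smul_eRadial_left {r t : ℝ} (hu : ContDiffAt ℝ 2 u (r • eRadial t)) :
    HasDerivAt (fun s => u (s • eRadial t)) (fderiv ℝ u (r • eRadial t) (eRadial t)) r :=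
  (hasFDerivAt_of_contDiffAt hu).comp_hasDerivAt r (hasDerivAt_smul_eRadial_left r t)

lemma hasDerivAt_fderiv_smul_eRadial_left {r t : ℝ} (hu : ContDiffAt ℝ 2 u (r • eRadial t)) :
    HasDerivAt (fun s => fderiv ℝ u (s • eRadial t) (eRadial t))
      (fderiv ℝ (fderiv ℝ u) (r • eRadial t) (eRadial t) (eRadial t)) r := by
  have hfderiv : HasDerivAt (fun s => fderiv ℝ u (s • eRadial t))
      (fderiv ℝ (fderiv ℝ u) (r • eRadial t) (eRadial t)) r :=
    (hasFDerivAt_fderiv_of_contDiffAt hu).comp_hasDerivAt r (hasDerivAt_smul_eRadial_left r t)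
  simpa using hfderiv.clm_apply (hasDerivAt_const r (eRadial t))

lemma hasDerivAt_comp_smul_eRadial_right {r t : ℝ} (hu : ContDiffAt ℝ 2 u (r • eRadial t)) :
    HasDerivAt (fun s => u (r • eRadial s)) (fderiv ℝ u (r • eRadial t) (r • eAngular t)) t :=
  (hasFDerivAt_of_contDiffAt hu).comp_hasDerivAt t ((hasDerivAt_eRadial t).const_smul r)

lemma hasDerivAt_fderiv_smul_eRadial_right {r t : ℝ} (hu : ContDiffAt ℝ 2 u (r • eRadial t)) :
    HasDerivAt (fun s => fderiv ℝ u (r • eRadial s) (r • eAngular s))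
      (r ^ 2 * fderiv ℝ (fderiv ℝ u) (r • eRadial t) (eAngular t) (eAngular t) -
        r * fderiv ℝ u (r • eRadial t) (eRadial t)) t := by
  have hfderiv : HasDerivAt (fun s => fderiv ℝ u (r • eRadial s))
      (fderiv ℝ (fderiv ℝ u) (r • eRadial t) (r • eAngular t)) t :=
    (hasFDerivAt_fderiv_of_contDiffAt hu).comp_hasDerivAt t ((hasDerivAt_eRadial t).const_smul r)
  convert! hfderiv.clm_apply ((hasDerivAt_eAngular t).fun_const_smul r) using 1
  simp only [map_smul, map_neg, smul_neg, _root_.smul_apply, real_smul]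
  ring

end PolarFrame

section HelmholtzEquation

/-- `u` is of class `C²` near `x` and satisfies the Helmholtz equation `Δu + κ² u = 0` at `x`. -/
structure HelmholtzAt (κ : ℝ) (u : ℝ² → ℂ) (x : ℝ²) : Prop where
  contDiffAt : ContDiffAt ℝ 2 u x
  lap_add_mul : lap u x + (κ : ℂ) ^ 2 * u x = 0

namespace HelmholtzAt

variable {κ : ℝ} {u v : ℝ² → ℂ} {x : ℝ²}

lemma of_contDiffOn {U : Set ℝ²} (hU : IsOpen U) (hu : ContDiffOn ℝ 2 u U)
    (hHelm : ∀ x ∈ U, lap u x + (κ : ℂ) ^ 2 * u x = 0) (hx : x ∈ U) : HelmholtzAt κ u x :=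
  ⟨hu.contDiffAt (hU.mem_nhds hx), hHelm x hx⟩

lemma congr (hu : HelmholtzAt κ u x) (huv : u =ᶠ[𝓝 x] v) : HelmholtzAt κ v x := by
  have hlap : lap v x = lap u x := by
    simp only [lap]
    refine Finset.sum_congr rfl fun i _ => ?_
    have hfderiv : (fun y => fderiv ℝ v y (EuclideanSpace.single i 1)) =ᶠ[𝓝 x]
        fun y => fderiv ℝ u y (EuclideanSpace.single i 1) :=
      huv.symm.fderiv.fun_comp fun L => L (EuclideanSpace.single i 1)
    rw [hfderiv.fderiv_eq]
  exact ⟨hu.contDiffAt.congr_of_eventuallyEq huv.symm, by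
    rw [hlap, ← huv.eq_of_nhds, hu.lap_add_mul]⟩

lemma comp_add_left {a : ℝ²} (hu : HelmholtzAt κ u (a + x)) :
    HelmholtzAt κ (fun y => u (a + y)) x := by
  refine ⟨hu.contDiffAt.comp x (by fun_prop), ?_⟩
  have hlap : lap (fun y => u (a + y)) x = lap u (a + x) := by
    simp only [lap, fderiv_comp_add_left]
    exact Finset.sum_congr rfl fun i _ => by
      rw [fderiv_comp_add_left (f := fun y => fderiv ℝ u y (EuclideanSpace.single i 1)) a]
  rw [hlap, hu.lap_add_mul]

lemma sub (hu : HelmholtzAt κ u x) (hv : HelmholtzAt κ v x) :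
    HelmholtzAt κ (fun y => u y - v y) x := by
  refine ⟨hu.contDiffAt.sub hv.contDiffAt, ?_⟩
  have hfderiv : fderiv ℝ (fun y => u y - v y) =ᶠ[𝓝 x] fun y => fderiv ℝ u y - fderiv ℝ v y := by
    filter_upwards [hu.contDiffAt.eventually (by simp), hv.contDiffAt.eventually (by simp)]
      with y hy hy'
    exact fderiv_fun_sub (hy.differentiableAt (by norm_num)) (hy'.differentiableAt (by norm_num))
  have hfderiv₂ : fderiv ℝ (fderiv ℝ fun y => u y - v y) x =
      fderiv ℝ (fderiv ℝ u) x - fderiv ℝ (fderiv ℝ v) x := by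
    rw [hfderiv.fderiv_eq]
    exact ((hasFDerivAt_fderiv_of_contDiffAt hu.contDiffAt).sub
      (hasFDerivAt_fderiv_of_contDiffAt hv.contDiffAt)).fderiv
  rw [lap_eq_eRadial_add_eAngular (hu.contDiffAt.sub hv.contDiffAt) 0, hfderiv₂]
  have hu' := hu.lap_add_mul
  have hv' := hv.lap_add_mul
  rw [lap_eq_eRadial_add_eAngular hu.contDiffAt 0] at hu'
  rw [lap_eq_eRadial_add_eAngular hv.contDiffAt 0] at hv'
  simp only [_root_.sub_apply]
  linear_combination hu' - hv'

end HelmholtzAt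

end HelmholtzEquation

section RadialModes

/-- The `n`-th angular Fourier coefficient of `u` on the circle of radius `r`. -/
def radialMode (n : ℤ) (u : ℝ² → ℂ) (r : ℝ) : ℂ := circleCoeff n fun t => u (r • eRadial t)

/-- The `n`-th angular Fourier coefficient of the radial derivative of `u` on the circle of
radius `r`, which is the derivative of `radialMode n u` at `r`. -/
def radialModeDeriv (n : ℤ) (u : ℝ² → ℂ) (r : ℝ) : ℂ :=
  circleCoeff n fun t => fderiv ℝ u (r • eRadial t) (eRadial t)

/-- The mode `radialMode n u` multiplied by `√r`, which puts Bessel's equation into Liouville normal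
form. -/
def reducedMode (n : ℤ) (u : ℝ² → ℂ) (r : ℝ) : ℂ := Real.sqrt r * radialMode n u r

/-- The derivative of `reducedMode n u`, for `r > 0` and `u` of class `C²`. -/
def reducedModeDeriv (n : ℤ) (u : ℝ² → ℂ) (r : ℝ) : ℂ :=
  Real.sqrt r * radialModeDeriv n u r + radialMode n u r / (2 * Real.sqrt r)

variable {κ : ℝ} {u : ℝ² → ℂ} {n : ℤ} {S : Set ℝ} {r : ℝ}

lemma hasDerivAt_radialMode (hS : IsOpen S) (hu : ∀ r ∈ S, ∀ t, ContDiffAt ℝ 2 u (r • eRadial t))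
    (hr : r ∈ S) : HasDerivAt (radialMode n u) (radialModeDeriv n u r) r := by
  have hfderiv := continuousOn_comp_smul_eRadial fun r hr t =>
    continuousAt_fderiv_of_contDiffAt (hu r hr t)
  refine hasDerivAt_intervalIntegral_of_continuousOn
    (F := fun r t => u (r • eRadial t) * exp (-I * n * t))
    (F' := fun r t => fderiv ℝ u (r • eRadial t) (eRadial t) * exp (-I * n * t))
    hS (fun r hr => ?_) (fun r hr t => ?_) ?_ hr _ _
  · exact (continuous_comp_smul_eRadial fun t => (hu r hr t).continuousAt).mul (by fun_prop)
  · exact (hasDerivAt_comp_smul_eRadial_left (hu r hr t)).mul_const _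
  · exact (hfderiv.clm_apply (by fun_prop)).mul (by fun_prop)

lemma hasDerivAt_radialModeDeriv (hS : IsOpen S)
    (hu : ∀ r ∈ S, ∀ t, ContDiffAt ℝ 2 u (r • eRadial t)) (hr : r ∈ S) :
    HasDerivAt (radialModeDeriv n u)
      (circleCoeff n fun t => fderiv ℝ (fderiv ℝ u) (r • eRadial t) (eRadial t) (eRadial t)) r := by
  have hfderiv₂ := continuousOn_comp_smul_eRadial fun r hr t =>
    continuousAt_fderiv_fderiv_of_contDiffAt (hu r hr t)
  refine hasDerivAt_intervalIntegral_of_continuousOn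
    (F := fun r t => fderiv ℝ u (r • eRadial t) (eRadial t) * exp (-I * n * t))
    (F' := fun r t => fderiv ℝ (fderiv ℝ u) (r • eRadial t) (eRadial t) (eRadial t) *
      exp (-I * n * t)) hS (fun r hr => ?_) (fun r hr t => ?_) ?_ hr _ _
  · exact ((continuous_comp_smul_eRadial fun t =>
      continuousAt_fderiv_of_contDiffAt (hu r hr t)).clm_apply (by fun_prop)).mul (by fun_prop)
  · exact (hasDerivAt_fderiv_smul_eRadial_left (hu r hr t)).mul_const _
  · exact ((hfderiv₂.clm_apply (by fun_prop)).clm_apply (by fun_prop)).mul (by fun_prop)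

lemma circleCoeff_fderiv_fderiv_eAngular (hu : ∀ t, ContDiffAt ℝ 2 u (r • eRadial t)) :
    circleCoeff n (fun t =>
      r ^ 2 * fderiv ℝ (fderiv ℝ u) (r • eRadial t) (eAngular t) (eAngular t) -
        r * fderiv ℝ u (r • eRadial t) (eRadial t)) = -(n : ℂ) ^ 2 * radialMode n u r := by
  have hfderiv := continuous_comp_smul_eRadial fun t => continuousAt_fderiv_of_contDiffAt (hu t)
  have hfderiv₂ := continuous_comp_smul_eRadial fun t =>
    continuousAt_fderiv_fderiv_of_contDiffAt (hu t)
  refine circleCoeff_deriv_deriv (fun t => hasDerivAt_comp_smul_eRadial_right (hu t))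
    (fun t => hasDerivAt_fderiv_smul_eRadial_right (hu t)) (by fun_prop)
    (fun t => ?_) fun t => ?_
  · simp only [eRadial_periodic t]
  · simp only [eRadial_periodic t, eAngular_periodic t]

lemma circleCoeff_fderiv_fderiv_eRadial (hu : ∀ t, HelmholtzAt κ u (r • eRadial t)) :
    r ^ 2 * circleCoeff n
        (fun t => fderiv ℝ (fderiv ℝ u) (r • eRadial t) (eRadial t) (eRadial t)) =
      -r * radialModeDeriv n u r + (n ^ 2 - κ ^ 2 * r ^ 2) * radialMode n u r := by
  have hC2 t := (hu t).contDiffAt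
  have hcont := continuous_comp_smul_eRadial fun t => (hC2 t).continuousAt
  have hfderiv := (continuous_comp_smul_eRadial fun t =>
    continuousAt_fderiv_of_contDiffAt (hC2 t)).clm_apply continuous_eRadial
  have hfderiv₂ := ((continuous_comp_smul_eRadial fun t =>
    continuousAt_fderiv_fderiv_of_contDiffAt (hC2 t)).clm_apply continuous_eRadial).clm_apply
    continuous_eRadial
  have hangular := circleCoeff_fderiv_fderiv_eAngular (n := n) hC2
  have hpolar (t : ℝ) :
      r ^ 2 * fderiv ℝ (fderiv ℝ u) (r • eRadial t) (eAngular t) (eAngular t) -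
          r * fderiv ℝ u (r • eRadial t) (eRadial t) =
        -r ^ 2 * fderiv ℝ (fderiv ℝ u) (r • eRadial t) (eRadial t) (eRadial t) +
          (-r * fderiv ℝ u (r • eRadial t) (eRadial t) + -κ ^ 2 * r ^ 2 * u (r • eRadial t)) := by
    have hHelm := (hu t).lap_add_mul
    rw [lap_eq_eRadial_add_eAngular (hC2 t) t] at hHelm
    linear_combination (r : ℂ) ^ 2 * hHelm
  simp only [hpolar] at hangular
  rw [circleCoeff_add (hfderiv₂.const_mul _) ((hfderiv.const_mul _).fun_add (hcont.const_mul _)),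
    circleCoeff_add (hfderiv.const_mul _) (hcont.const_mul _), circleCoeff_const_mul,
    circleCoeff_const_mul, circleCoeff_const_mul, ← radialMode, ← radialModeDeriv] at hangular
  linear_combination -hangular

lemma hasDerivAt_radialModeDeriv_of_helmholtzAt (hS : IsOpen S)
    (hu : ∀ r ∈ S, ∀ t, HelmholtzAt κ u (r • eRadial t)) (hr : r ∈ S) (hr0 : r ≠ 0) :
    HasDerivAt (radialModeDeriv n u)
      (-(1 / r) * radialModeDeriv n u r + (n ^ 2 / r ^ 2 - κ ^ 2) * radialMode n u r) r := by
  convert! hasDerivAt_radialModeDeriv hS (fun r hr t => (hu r hr t).contDiffAt) hr using 1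
  have hr0' : (r : ℂ) ≠ 0 := ofReal_ne_zero.2 hr0
  have hbessel := circleCoeff_fderiv_fderiv_eRadial (n := n) (hu r hr)
  field_simp
  linear_combination -hbessel

lemma isRadialSolution_reducedMode (hS : IsOpen S) (hpos : ∀ r ∈ S, 0 < r)
    (hu : ∀ r ∈ S, ∀ t, HelmholtzAt κ u (r • eRadial t)) :
    IsRadialSolution κ (n ^ 2 - 1 / 4) S (reducedMode n u) (reducedModeDeriv n u) := by
  have hsqrt {r : ℝ} (hr : r ∈ S) := (Real.hasDerivAt_sqrt (hpos r hr).ne').ofReal_comp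
  have hsqrt0 {r : ℝ} (hr : r ∈ S) : (Real.sqrt r : ℂ) ≠ 0 :=
    ofReal_ne_zero.2 (Real.sqrt_pos.2 (hpos r hr)).ne'
  have hmode {r : ℝ} (hr : r ∈ S) :=
    hasDerivAt_radialMode (n := n) hS (fun r hr t => (hu r hr t).contDiffAt) hr
  constructor <;> intro r hr
  · convert! (hsqrt hr).mul (hmode hr) using 1
    have := hsqrt0 hr
    simp only [reducedModeDeriv]
    push_cast
    field_simp
    ring
  · have hmode' := hasDerivAt_radialModeDeriv_of_helmholtzAt (n := n) hS hu hr (hpos r hr).ne'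
    have := hsqrt0 hr
    have hsq : (r : ℂ) = (Real.sqrt r : ℂ) ^ 2 := mod_cast (Real.sq_sqrt (hpos r hr).le).symm
    convert! ((hsqrt hr).mul hmode').add ((hmode hr).div ((hsqrt hr).const_mul 2)
      (mul_ne_zero two_ne_zero (hsqrt0 hr))) using 1
    simp only [reducedMode, real_smul]
    push_cast
    rw [hsq]
    field_simp
    ring

lemma inner_I_mul_reducedMode (hr : 0 < r) :
    ⟪I * reducedMode n u r, reducedModeDeriv n u r⟫_ℝ =
      r * ⟪I * radialMode n u r, radialModeDeriv n u r⟫_ℝ := by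
  have hmode : I * reducedMode n u r = Real.sqrt r • (I * radialMode n u r) := by
    rw [reducedMode, real_smul]
    ring
  have hderiv : reducedModeDeriv n u r =
      Real.sqrt r • radialModeDeriv n u r + (2 * Real.sqrt r)⁻¹ • radialMode n u r := by
    rw [reducedModeDeriv, real_smul, real_smul]
    push_cast
    ring
  rw [hmode, hderiv, inner_add_right, real_inner_smul_left, real_inner_smul_left,
    real_inner_smul_right, real_inner_smul_right, real_inner_I_mul_self, mul_zero, mul_zero,
    add_zero, ← mul_assoc, Real.mul_self_sqrt hr.le]

lemma eq_zero_of_reducedMode_eq_zero (hr : 0 < r) (hu : ∀ t, ContinuousAt u (r • eRadial t))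
    (hzero : ∀ n, reducedMode n u r = 0) (t : ℝ) : u (r • eRadial t) = 0 :=
  congrFun (eq_zero_of_circleCoeff_eq_zero (continuous_comp_smul_eRadial hu)
    (fun t => by simp only [eRadial_periodic t])
    fun n => (mul_eq_zero.1 (hzero n)).resolve_left
      (ofReal_ne_zero.2 (Real.sqrt_pos.2 hr).ne')) t

end RadialModes

section UniqueContinuation

namespace HelmholtzAt

variable {κ : ℝ} {u : ℝ² → ℂ}

lemma eq_zero_of_eventuallyEq_zero_of_norm_lt (hκ : κ ≠ 0) {R : ℝ}
    (hu : ∀ x, ‖x‖ < R → HelmholtzAt κ u x) (hzero : u =ᶠ[𝓝 0] 0) {x : ℝ²} (hx : ‖x‖ < R) :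
    u x = 0 := by
  rcases eq_or_ne x 0 with rfl | hx0
  · exact hzero.eq_of_nhds
  obtain ⟨ρ, hρ, hball⟩ := Metric.eventually_nhds_iff.1 hzero.eventuallyEq_nhds
  have hpolar : ∀ r ∈ Set.Ioo 0 R, ∀ t, HelmholtzAt κ u (r • eRadial t) := fun r hr t =>
    hu _ (by rw [norm_smul_eRadial hr.1.le]; exact hr.2)
  set s := min (ρ / 2) (‖x‖ / 2)
  have hs : s ∈ Set.Ioo 0 R :=
    ⟨by positivity, (min_le_right _ _).trans_lt (by linarith [norm_nonneg x])⟩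
  have hlocal (t : ℝ) : u =ᶠ[𝓝 (s • eRadial t)] 0 := hball <| by
    rw [dist_zero_right, norm_smul_eRadial hs.1.le]
    exact (min_le_left _ _).trans_lt (by linarith)
  have hmode (n : ℤ) : radialMode n u s = 0 := by
    simp [radialMode, fun t => (hlocal t).eq_of_nhds, ← Pi.zero_def]
  have hmodeDeriv (n : ℤ) : radialModeDeriv n u s = 0 := by
    have hfderiv (t : ℝ) : fderiv ℝ u (s • eRadial t) = 0 := by
      rw [(hlocal t).fderiv_eq, fderiv_zero, Pi.zero_apply]
    simp [radialModeDeriv, hfderiv, ← Pi.zero_def]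
  obtain ⟨t, ht⟩ := exists_norm_smul_eRadial x
  have hxR : ‖x‖ ∈ Set.Ioo 0 R := ⟨norm_pos_iff.2 hx0, hx⟩
  rw [← ht]
  refine eq_zero_of_reducedMode_eq_zero hxR.1 (fun t => (hpolar _ hxR t).contDiffAt.continuousAt)
    (fun n => ?_) t
  exact (isRadialSolution_reducedMode isOpen_Ioo (fun _ h => h.1) hpolar).eq_zero_of_eq_zero hκ
    (convex_Ioo 0 R) (fun _ h => h.1) hs hxR (by simp [reducedMode, hmode])
    (by simp [reducedModeDeriv, hmode, hmodeDeriv])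

lemma eqOn_ball_zero_of_eventuallyEq_zero (hκ : κ ≠ 0) {a : ℝ²} {R : ℝ}
    (hu : ∀ x ∈ Metric.ball a R, HelmholtzAt κ u x) (hzero : u =ᶠ[𝓝 a] 0) :
    Set.EqOn u 0 (Metric.ball a R) := by
  intro x hx
  have htranslate : ∀ y, ‖y‖ < R → HelmholtzAt κ (fun y => u (a + y)) y := fun y hy =>
    (hu _ (by simpa using hy)).comp_add_left
  have hnear : (fun y => u (a + y)) =ᶠ[𝓝 0] 0 := by
    have hcont : Tendsto (fun y => a + y) (𝓝 0) (𝓝 a) := by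
      simpa using (continuous_const_add a).tendsto 0
    exact hcont.eventually hzero
  simpa using eq_zero_of_eventuallyEq_zero_of_norm_lt hκ htranslate hnear (x := x - a)
    (by rwa [← dist_eq_norm])

lemma eqOn_zero_of_preconnected_of_eventuallyEq_zero (hκ : κ ≠ 0) {U : Set ℝ²} (hU : IsOpen U)
    (hUc : IsPreconnected U) (hu : ∀ x ∈ U, HelmholtzAt κ u x) {x₀ : ℝ²} (hx₀ : x₀ ∈ U)
    (hzero : u =ᶠ[𝓝 x₀] 0) : Set.EqOn u 0 U := by
  have hclosed : closure {x | u =ᶠ[𝓝 x] 0} ∩ U ⊆ {x | u =ᶠ[𝓝 x] 0} := by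
    rintro x ⟨hxcl, hxU⟩
    obtain ⟨r, hr, hball⟩ := Metric.isOpen_iff.1 hU x hxU
    obtain ⟨y, hy, hxy⟩ := Metric.mem_closure_iff.1 hxcl (r / 2) (half_pos hr)
    have hyU : Metric.ball y (r / 2) ⊆ U :=
      (Metric.ball_subset_ball' (by rw [dist_comm]; linarith)).trans hball
    have heqOn := eqOn_ball_zero_of_eventuallyEq_zero hκ (fun z hz => hu z (hyU hz)) hy
    exact heqOn.eventuallyEq_of_mem (Metric.isOpen_ball.mem_nhds hxy)
  have hsub : U ⊆ {x | u =ᶠ[𝓝 x] 0} := hUc.subset_of_closure_inter_subset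
    isOpen_setOfPred_eventually_nhds ⟨x₀, hx₀, hzero⟩ hclosed
  exact fun x hx => (hsub hx).eq_of_nhds

end HelmholtzAt

end UniqueContinuation

section FarField

variable {κ : ℝ} {u v uInf vInf : ℝ² → ℂ}

lemma farFieldConst_ne_zero (hκ : 0 < κ) : farFieldConst κ ≠ 0 :=
  div_ne_zero (exp_ne_zero _) (ofReal_ne_zero.2 (Real.sqrt_pos.2 (by positivity)).ne')

lemma isFarFieldPattern_sub (hu : IsFarFieldPattern κ u uInf) (hv : IsFarFieldPattern κ v vInf) :
    IsFarFieldPattern κ (fun x => u x - v x) (fun θ => uInf θ - vInf θ) := by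
  intro ε hε
  obtain ⟨A, hA⟩ := hu (ε / 2) (half_pos hε)
  obtain ⟨B, hB⟩ := hv (ε / 2) (half_pos hε)
  refine ⟨max A B, fun r hr θ hθ => ?_⟩
  have hnorm := norm_sub_le_of_le (hA r ((le_max_left _ _).trans hr) θ hθ)
    (hB r ((le_max_right _ _).trans hr) θ hθ)
  rw [add_halves] at hnorm
  convert! hnorm using 2
  ring

lemma isFarFieldPattern_congr {R : ℝ} (hu : IsFarFieldPattern κ u uInf)
    (huv : ∀ x, R < ‖x‖ → v x = u x) : IsFarFieldPattern κ v uInf := by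
  intro ε hε
  obtain ⟨A, hA⟩ := hu ε hε
  refine ⟨max A (|R| + 1), fun r hr θ hθ => ?_⟩
  have hrR : |R| + 1 ≤ r := (le_max_right _ _).trans hr
  rw [huv]
  · exact hA r ((le_max_left _ _).trans hr) θ hθ
  · rw [norm_smul, hθ, mul_one, Real.norm_eq_abs]
    linarith [le_abs_self R, le_abs_self r]

lemma tendstoUniformly_of_isFarFieldPattern (hff : IsFarFieldPattern κ v vInf) :
    TendstoUniformly
      (fun (r t : ℝ) => Real.sqrt r * exp (-I * κ * r) * v (r • eRadial t))
      (fun t => farFieldConst κ * vInf (eRadial t)) atTop := by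
  rw [Metric.tendstoUniformly_iff]
  intro ε hε
  obtain ⟨A, hA⟩ := hff (ε / 2) (half_pos hε)
  filter_upwards [eventually_ge_atTop A] with r hr t
  rw [dist_comm, dist_eq_norm]
  exact (hA r hr _ (norm_eRadial t)).trans_lt (half_lt_self hε)

lemma tendsto_exp_mul_reducedMode (hv : ∀ᶠ r : ℝ in atTop, ∀ t, ContinuousAt v (r • eRadial t))
    (hff : IsFarFieldPattern κ v vInf) (n : ℤ) :
    Tendsto (fun r : ℝ => exp (-I * κ * r) * reducedMode n v r) atTop
      (𝓝 (circleCoeff n fun t => farFieldConst κ * vInf (eRadial t))) := by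
  refine (tendsto_circleCoeff (n := n) ?_ (tendstoUniformly_of_isFarFieldPattern hff)).congr
    fun r => ?_
  · filter_upwards [hv] with r hr
    exact (continuous_comp_smul_eRadial hr).const_mul _
  · rw [circleCoeff_const_mul, ← radialMode, reducedMode]
    ring

lemma eq_zero_of_isFarFieldPattern_zero (hκ : κ ≠ 0) {A : ℝ} (hA : 0 ≤ A)
    (hu : ∀ x, A < ‖x‖ → HelmholtzAt κ u x) (hff : IsFarFieldPattern κ u 0) {x : ℝ²}
    (hx : A < ‖x‖) : u x = 0 := by
  have hpolar : ∀ r ∈ Set.Ioi A, ∀ t, HelmholtzAt κ u (r • eRadial t) := fun r hr t =>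
    hu _ (by rwa [norm_smul_eRadial (hA.trans hr.le)])
  have hpos : ∀ r ∈ Set.Ioi A, 0 < r := fun r hr => hA.trans_lt hr
  have hlim := tendsto_exp_mul_reducedMode
    ((eventually_gt_atTop A).mono fun r hr t => (hpolar r hr t).contDiffAt.continuousAt) hff
  simp only [Pi.zero_apply, mul_zero, ← Pi.zero_def, circleCoeff_zero] at hlim
  obtain ⟨t, ht⟩ := exists_norm_smul_eRadial x
  rw [← ht]
  exact eq_zero_of_reducedMode_eq_zero (hpos _ hx)
    (fun t => (hpolar _ hx t).contDiffAt.continuousAt)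
    (fun n => (isRadialSolution_reducedMode isOpen_Ioi hpos hpolar).eq_zero_of_tendsto_zero hκ hA
      (hlim n) hx) t

lemma inner_I_mul_reducedMode_eq_zero (hu : ∀ x, HelmholtzAt κ u x) (n : ℤ) {r : ℝ} (hr : 0 < r) :
    ⟪I * reducedMode n u r, reducedModeDeriv n u r⟫_ℝ = 0 := by
  have hC2 : ∀ s ∈ (Set.univ : Set ℝ), ∀ t, ContDiffAt ℝ 2 u (s • eRadial t) :=
    fun s _ t => (hu _).contDiffAt
  have hflux : Continuous fun s : ℝ => s * ⟪I * radialMode n u s, radialModeDeriv n u s⟫_ℝ := by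
    refine continuous_iff_continuousAt.2 fun s => continuousAt_id.mul (ContinuousAt.inner ?_ ?_)
    · exact (hasDerivAt_radialMode isOpen_univ hC2 trivial).continuousAt.const_mul I
    · exact (hasDerivAt_radialModeDeriv isOpen_univ hC2 trivial).continuousAt
  have hconst : ∀ s ∈ Set.Ioi (0 : ℝ), s * ⟪I * radialMode n u s, radialModeDeriv n u s⟫_ℝ =
      ⟪I * reducedMode n u r, reducedModeDeriv n u r⟫_ℝ := fun s hs => by
    rw [← inner_I_mul_reducedMode hs]
    exact (isRadialSolution_reducedMode isOpen_Ioi (fun _ h => h) fun s _ t => hu _).inner_I_mul_eq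
      isOpen_Ioi isPreconnected_Ioi hs hr
  have hzero := (hflux.tendsto 0).mono_left (nhdsWithin_le_nhds (s := Set.Ioi 0))
  rw [zero_mul] at hzero
  exact tendsto_nhds_unique (tendsto_const_nhds.congr' (by
    filter_upwards [self_mem_nhdsWithin] with s hs using (hconst s hs).symm)) hzero

lemma eq_zero_of_forall_helmholtzAt (hκ : κ ≠ 0) (hu : ∀ x, HelmholtzAt κ u x)
    (hff : IsFarFieldPattern κ u uInf) {x : ℝ²} (hx : x ≠ 0) : u x = 0 := by
  have hcont : Continuous u := continuous_iff_continuousAt.2 fun x => (hu x).contDiffAt.continuousAt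
  have hlim := tendsto_exp_mul_reducedMode (Eventually.of_forall fun r t => hcont.continuousAt) hff
  obtain ⟨t, ht⟩ := exists_norm_smul_eRadial x
  have hx' := norm_pos_iff.2 hx
  rw [← ht]
  exact eq_zero_of_reducedMode_eq_zero hx' (fun t => hcont.continuousAt)
    (fun n => (isRadialSolution_reducedMode isOpen_Ioi (fun _ h => h)
      fun r _ t => hu _).eq_zero_of_inner_I_mul_eq_zero hκ le_rfl (hlim n)
        (fun r hr => inner_I_mul_reducedMode_eq_zero hu n hr) hx') t

lemma farField_eq_zero_of_forall_helmholtzAt (hκ : 0 < κ) (hu : ∀ x, HelmholtzAt κ u x)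
    (hff : IsFarFieldPattern κ u uInf) {θ : ℝ²} (hθ : ‖θ‖ = 1) : uInf θ = 0 := by
  obtain ⟨t, rfl⟩ := exists_eRadial_eq hθ
  have hlim := (tendstoUniformly_of_isFarFieldPattern hff).tendsto_at t
  have hzero : ∀ᶠ r : ℝ in atTop, Real.sqrt r * exp (-I * κ * r) * u (r • eRadial t) = 0 := by
    filter_upwards [eventually_gt_atTop 0] with r hr
    rw [eq_zero_of_forall_helmholtzAt hκ.ne' hu hff, mul_zero]
    rw [← norm_pos_iff, norm_smul_eRadial hr.le]
    exact hr
  exact (mul_eq_zero.1 (tendsto_nhds_unique (hlim.congr' hzero) tendsto_const_nhds)).resolve_left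
    (farFieldConst_ne_zero hκ)

end FarField

lemma exists_forall_helmholtzAt_of_eqOn {κ : ℝ} {K₁ K₂ : Set ℝ²} (hK₁ : IsClosed K₁)
    (hK₂ : IsClosed K₂) (hK : Disjoint K₁ K₂) {v₁ v₂ : ℝ² → ℂ}
    (hv₁ : ∀ x ∈ K₁ᶜ, HelmholtzAt κ v₁ x) (hv₂ : ∀ x ∈ K₂ᶜ, HelmholtzAt κ v₂ x)
    (heq : Set.EqOn v₁ v₂ (K₁ ∪ K₂)ᶜ) :
    ∃ u : ℝ² → ℂ, (∀ x, HelmholtzAt κ u x) ∧ Set.EqOn u v₁ K₁ᶜ := by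
  classical
  have heq₁ : Set.EqOn (K₁.piecewise v₂ v₁) v₁ K₁ᶜ := K₁.piecewise_eqOn_compl v₂ v₁
  have heq₂ : Set.EqOn (K₁.piecewise v₂ v₁) v₂ K₂ᶜ := fun x hx => by
    by_cases hx₁ : x ∈ K₁
    · exact K₁.piecewise_eq_of_mem v₂ v₁ hx₁
    · rw [heq₁ hx₁, heq (by simp_all)]
  refine ⟨K₁.piecewise v₂ v₁, fun x => ?_, heq₁⟩
  by_cases hx : x ∈ K₁
  · have hx₂ : x ∈ K₂ᶜ := hK.notMem_of_mem_left hx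
    exact (hv₂ x hx₂).congr (heq₂.symm.eventuallyEq_of_mem (hK₂.isOpen_compl.mem_nhds hx₂))
  · exact (hv₁ x hx).congr (heq₁.symm.eventuallyEq_of_mem (hK₁.isOpen_compl.mem_nhds hx))

lemma eqOn_of_isFarFieldPattern {κ : ℝ} (hκ : κ ≠ 0) {K : Set ℝ²} (hK : IsCompact K)
    (hconn : IsPreconnected Kᶜ) {v₁ v₂ vInf : ℝ² → ℂ} (hv₁ : ∀ x ∈ Kᶜ, HelmholtzAt κ v₁ x)
    (hv₂ : ∀ x ∈ Kᶜ, HelmholtzAt κ v₂ x) (hff₁ : IsFarFieldPattern κ v₁ vInf)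
    (hff₂ : IsFarFieldPattern κ v₂ vInf) : Set.EqOn v₁ v₂ Kᶜ := by
  obtain ⟨R, hR, hKR⟩ := hK.isBounded.exists_pos_norm_le
  have hsub : {x : ℝ² | R < ‖x‖} ⊆ Kᶜ := fun x hx hxK => (hKR x hxK).not_gt hx
  have hdiff : ∀ x ∈ Kᶜ, HelmholtzAt κ (fun x => v₁ x - v₂ x) x :=
    fun x hx => (hv₁ x hx).sub (hv₂ x hx)
  have hff : IsFarFieldPattern κ (fun x => v₁ x - v₂ x) 0 := by
    simpa only [sub_self, ← Pi.zero_def] using isFarFieldPattern_sub hff₁ hff₂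
  have hfar : Set.EqOn (fun x => v₁ x - v₂ x) 0 {x : ℝ² | R < ‖x‖} := fun x hx =>
    eq_zero_of_isFarFieldPattern_zero hκ hR.le (fun y hy => hdiff y (hsub hy)) hff hx
  have hx₀ : (R + 1) • eRadial 0 ∈ {x : ℝ² | R < ‖x‖} := by
    rw [Set.mem_ofPred_eq, norm_smul_eRadial (by positivity)]
    exact lt_add_one R
  have hnear := hfar.eventuallyEq_of_mem
    ((isOpen_lt continuous_const continuous_norm).mem_nhds hx₀)
  exact fun x hx => sub_eq_zero.1 <| HelmholtzAt.eqOn_zero_of_preconnected_of_eventuallyEq_zero hκ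
    hK.isClosed.isOpen_compl hconn hdiff (hsub hx₀) hnear hx

end PlanarHelmholtz

open PlanarHelmholtz in
theorem weak_uniqueness_general {κ : ℝ} (hκ : 0 < κ) {K₁ K₂ : Set (EuclideanSpace ℝ (Fin 2))}
    (hK₁ : IsCompact K₁) (hK₂ : IsCompact K₂) (hconn : IsPreconnected (K₁ ∪ K₂)ᶜ)
    {v₁ v₂ vInf : EuclideanSpace ℝ (Fin 2) → ℂ}
    (hv₁ : ContDiffOn ℝ 2 v₁ K₁ᶜ) (hv₂ : ContDiffOn ℝ 2 v₂ K₂ᶜ)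
    (hHelm₁ : ∀ x ∈ K₁ᶜ, lap v₁ x + (κ : ℂ) ^ 2 * v₁ x = 0)
    (hHelm₂ : ∀ x ∈ K₂ᶜ, lap v₂ x + (κ : ℂ) ^ 2 * v₂ x = 0)
    (hff₁ : IsFarFieldPattern κ v₁ vInf) (hff₂ : IsFarFieldPattern κ v₂ vInf)
    (hnontriv : ∃ θ ∈ Metric.sphere (0 : EuclideanSpace ℝ (Fin 2)) 1, vInf θ ≠ 0) :
    (K₁ ∩ K₂).Nonempty := by
  by_contra hempty
  have hdisj : Disjoint K₁ K₂ :=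
    Set.disjoint_iff_inter_eq_empty.2 (Set.not_nonempty_iff_eq_empty.1 hempty)
  have hH₁ : ∀ x ∈ K₁ᶜ, HelmholtzAt κ v₁ x :=
    fun _ => HelmholtzAt.of_contDiffOn hK₁.isClosed.isOpen_compl hv₁ hHelm₁
  have hH₂ : ∀ x ∈ K₂ᶜ, HelmholtzAt κ v₂ x :=
    fun _ => HelmholtzAt.of_contDiffOn hK₂.isClosed.isOpen_compl hv₂ hHelm₂
  have heq : Set.EqOn v₁ v₂ (K₁ ∪ K₂)ᶜ := eqOn_of_isFarFieldPattern hκ.ne' (hK₁.union hK₂) hconn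
    (fun x hx => hH₁ x fun h => hx (.inl h)) (fun x hx => hH₂ x fun h => hx (.inr h)) hff₁ hff₂
  obtain ⟨u, hu, huv⟩ :=
    exists_forall_helmholtzAt_of_eqOn hK₁.isClosed hK₂.isClosed hdisj hH₁ hH₂ heq
  obtain ⟨R, -, hKR⟩ := hK₁.isBounded.exists_pos_norm_le
  have huff : IsFarFieldPattern κ u vInf :=
    isFarFieldPattern_congr hff₁ fun x (hx : R < ‖x‖) => huv fun hxK => (hKR x hxK).not_gt hx
  obtain ⟨θ, hθ, hθ'⟩ := hnontriv
  exact hθ' (farField_eq_zero_of_forall_helmholtzAt hκ hu huff (mem_sphere_zero_iff_norm.1 hθ))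

/-- Weak uniqueness (Theorem 3.1): two radiating exterior Helmholtz solutions with identical
non-trivial far-field patterns must have intersecting obstacle closures. -/
theorem weak_uniqueness (κ : ℝ) (hκ : 0 < κ)
    (D₁ D₂ : Set (EuclideanSpace ℝ (Fin 2)))
    (hD₁o : IsOpen D₁) (hD₂o : IsOpen D₂)
    (hD₁b : Bornology.IsBounded D₁) (hD₂b : Bornology.IsBounded D₂)
    (hconn : IsConnected ((closure D₁ ∪ closure D₂)ᶜ))
    (v₁ v₂ : EuclideanSpace ℝ (Fin 2) → ℂ)
    (hv₁ : ContDiffOn ℝ 2 v₁ (closure D₁)ᶜ)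
    (hv₂ : ContDiffOn ℝ 2 v₂ (closure D₂)ᶜ)
    (hHelm₁ : ∀ x ∈ (closure D₁)ᶜ, lap v₁ x + (κ : ℂ) ^ 2 * v₁ x = 0)
    (hHelm₂ : ∀ x ∈ (closure D₂)ᶜ, lap v₂ x + (κ : ℂ) ^ 2 * v₂ x = 0)
    (hrad₁ : SommerfeldRadiation κ v₁) (hrad₂ : SommerfeldRadiation κ v₂)
    (vInf : EuclideanSpace ℝ (Fin 2) → ℂ)
    (hcont : ContinuousOn vInf (Metric.sphere (0 : EuclideanSpace ℝ (Fin 2)) 1))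
    (hff₁ : IsFarFieldPattern κ v₁ vInf) (hff₂ : IsFarFieldPattern κ v₂ vInf)
    (hnontriv : ∃ θ ∈ Metric.sphere (0 : EuclideanSpace ℝ (Fin 2)) 1, vInf θ ≠ 0) :
    (closure D₁ ∩ closure D₂).Nonempty := by
  exact weak_uniqueness_general hκ hD₁b.isCompact_closure hD₂b.isCompact_closure
    hconn.isPreconnected hv₁ hv₂ hHelm₁ hHelm₂ hff₁ hff₂ hnontriv

end
end
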